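/- arXiv:1409.6352 — 2 statements merged into one kernel-verified Lean document; each statement's English description precedes it below -/
import Mathlib

section
/- Let δ > 0 and let α, β : (0,1) → ℝ be functions with β(ε) − α(ε) ≥ ε^{1/2−δ} for all ε ∈ (0,1). Let R_ε(α,β) = {x ∈ [α(ε), β(ε)] : there exist integers a and q ≥ 1 with gcd(a,q) = 1 such that (x − a/q)² + (ε − 1/(2q²))² ≤ 1/(4q⁴)}. Then the Lebesgue measure of R_ε(α,β) divided by β(ε) − α(ε) tends to 3/π as ε → 0⁺. -/
open MeasureTheory

/-- The set of points of the horizontal segment `[α(ε), β(ε)]` at height `ε` lying inside some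
Ford disk. -/
def fordSetAB (α β : ℝ → ℝ) (ε : ℝ) : Set ℝ :=
  {x | x ∈ Set.Icc (α ε) (β ε) ∧ ∃ a q : ℤ, 1 ≤ q ∧ Int.gcd a q = 1 ∧
    (x - (a : ℝ) / q) ^ 2 + (ε - 1 / (2 * (q : ℝ) ^ 2)) ^ 2 ≤ 1 / (4 * (q : ℝ) ^ 4)}

/-!
The horizontal line at height `ε` cuts the Ford disk at `a / q` in a chord of half-length
`√ε / q * √(1 - ε q²)`, and chords at distinct reduced fractions do not overlap. By Möbius
inversion an interval of length `L` contains `L φ(q) + O(τ(q))` reduced fractions of denominator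
`q`, so the chords over it have total length `L ∑ 2 √ε √(1 - ε q²) φ(q) / q + O(√ε log² ε)`. Since
`φ(q) / q` has mean value `6 / π²`, the sum tends to `2 · (6 / π²) · ∫₀¹ √(1 - u²) du = 3 / π`.
-/

open Filter Topology Asymptotics
open scoped ArithmeticFunction.Moebius Nat

section CoprimeCount

variable {x y : ℝ} {q : ℕ}

lemma abs_card_Icc_ceil_floor_sub_le (hxy : x ≤ y) :
    |((Finset.Icc ⌈x⌉ ⌊y⌋).card : ℝ) - (y - x)| ≤ 1 := by
  have hx := Int.ceil_lt_add_one x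
  have hy := Int.lt_floor_add_one y
  have hlen : (0 : ℤ) ≤ ⌊y⌋ + 1 - ⌈x⌉ := by
    have : (⌈x⌉ : ℝ) < ((⌊y⌋ + 2 : ℤ) : ℝ) := by push_cast; linarith
    have := Int.cast_lt.1 this
    omega
  have hcard : ((Finset.Icc ⌈x⌉ ⌊y⌋).card : ℝ) = ⌊y⌋ + 1 - ⌈x⌉ := by
    exact_mod_cast (Int.card_Icc ⌈x⌉ ⌊y⌋ ▸ Int.toNat_of_nonneg hlen)
  rw [hcard, abs_le]
  constructor <;> linarith [Int.le_ceil x, Int.floor_le y]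

lemma card_filter_dvd_Icc_ceil_floor (x y : ℝ) {d : ℕ} (hd : 0 < d) :
    (Finset.filter ((d : ℤ) ∣ ·) (Finset.Icc ⌈x⌉ ⌊y⌋)).card =
      (Finset.Icc ⌈x / d⌉ ⌊y / d⌋).card := by
  have hd' : (0 : ℝ) < d := by exact_mod_cast hd
  have hmem (b : ℤ) : d * b ∈ Finset.Icc ⌈x⌉ ⌊y⌋ ↔ b ∈ Finset.Icc ⌈x / d⌉ ⌊y / d⌋ := by
    simp only [Finset.mem_Icc, Int.ceil_le, Int.le_floor, div_le_iff₀' hd', le_div_iff₀' hd']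
    push_cast
    rfl
  symm
  refine Finset.card_nbij ((d : ℤ) * ·) ?_ ?_ ?_
  · intro b hb
    exact Finset.mem_coe.2 (Finset.mem_filter.2 ⟨(hmem b).2 hb, dvd_mul_right _ _⟩)
  · exact (mul_right_injective₀ (by exact_mod_cast hd.ne')).injOn
  · intro a ha
    obtain ⟨ha, b, rfl⟩ := Finset.mem_filter.1 ha
    exact ⟨b, (hmem b).1 ha, rfl⟩

lemma sum_divisors_moebius (n : ℕ) : ∑ d ∈ n.divisors, μ d = if n = 1 then 1 else 0 := by
  rw [← ArithmeticFunction.coe_mul_zeta_apply, ArithmeticFunction.moebius_mul_coe_zeta,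
    ArithmeticFunction.one_apply]

lemma sum_divisors_moebius_div (q : ℕ) : ∑ d ∈ q.divisors, (μ d : ℝ) / d = φ q / q := by
  rcases q.eq_zero_or_pos with rfl | hq
  · simp
  have hinv : ∑ p ∈ q.divisorsAntidiagonal, (μ p.1 : ℝ) * p.2 = φ q :=
    ArithmeticFunction.sum_eq_iff_sum_mul_moebius_eq (f := fun n => (φ n : ℝ)).1
      (fun n _ => by exact_mod_cast Nat.sum_totient n) q hq
  rw [← hinv, Finset.sum_div, ← Nat.sum_divisorsAntidiagonal (fun d _ => (μ d : ℝ) / d)]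
  refine Finset.sum_congr rfl fun p hp => ?_
  obtain ⟨hpq, -⟩ := Nat.mem_divisorsAntidiagonal.1 hp
  have h1 : (p.1 : ℝ) ≠ 0 := by rintro h; simp_all
  have h2 : (p.2 : ℝ) ≠ 0 := by rintro h; simp_all
  rw [← hpq]
  push_cast
  field_simp

/-- The integers in the real interval `[x, y]` that are coprime to `q`. -/
noncomputable def coprimeIcc (x y : ℝ) (q : ℕ) : Finset ℤ :=
  {a ∈ Finset.Icc ⌈x⌉ ⌊y⌋ | Int.gcd a q = 1}

lemma mem_coprimeIcc {a : ℤ} : a ∈ coprimeIcc x y q ↔ (x ≤ a ∧ a ≤ y) ∧ Int.gcd a q = 1 := by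
  simp [coprimeIcc, Int.ceil_le, Int.le_floor]

lemma card_coprimeIcc_eq_sum_moebius (x y : ℝ) (hq : q ≠ 0) :
    ((coprimeIcc x y q).card : ℤ) =
      ∑ d ∈ q.divisors, μ d * (Finset.Icc ⌈x / d⌉ ⌊y / d⌋).card := by
  have hgcd (a : ℤ) : (Int.gcd a q).divisors = q.divisors.filter fun d : ℕ => (d : ℤ) ∣ a := by
    ext d
    simp [Int.gcd_eq_natAbs, Nat.dvd_gcd_iff, Int.natCast_dvd, hq, and_comm]
  calc ((coprimeIcc x y q).card : ℤ)
      = ∑ a ∈ Finset.Icc ⌈x⌉ ⌊y⌋, ∑ d ∈ (Int.gcd a q).divisors, μ d := by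
        simp only [coprimeIcc, sum_divisors_moebius, Finset.sum_boole]
    _ = ∑ d ∈ q.divisors, ∑ a ∈ Finset.Icc ⌈x⌉ ⌊y⌋, if (d : ℤ) ∣ a then μ d else 0 := by
        simp only [hgcd, Finset.sum_filter]
        exact Finset.sum_comm
    _ = ∑ d ∈ q.divisors, μ d * (Finset.Icc ⌈x / d⌉ ⌊y / d⌋).card := by
        refine Finset.sum_congr rfl fun d hd => ?_
        rw [← Finset.sum_filter, Finset.sum_const, nsmul_eq_mul, mul_comm,
          card_filter_dvd_Icc_ceil_floor x y (Nat.pos_of_mem_divisors hd)]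

theorem abs_card_coprimeIcc_sub_le (hxy : x ≤ y) (hq : q ≠ 0) :
    |((coprimeIcc x y q).card : ℝ) - (y - x) * (φ q / q)| ≤ q.divisors.card := by
  have hcard : ((coprimeIcc x y q).card : ℝ) =
      ∑ d ∈ q.divisors, (μ d : ℝ) * (Finset.Icc ⌈x / d⌉ ⌊y / d⌋).card := by
    exact_mod_cast card_coprimeIcc_eq_sum_moebius x y hq
  rw [hcard, ← sum_divisors_moebius_div, Finset.mul_sum, ← Finset.sum_sub_distrib]
  refine (Finset.abs_sum_le_sum_abs _ _).trans ?_
  rw [← nsmul_one, ← Finset.sum_const]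
  refine Finset.sum_le_sum fun d _ => ?_
  have hμ : |(μ d : ℝ)| ≤ 1 := by exact_mod_cast ArithmeticFunction.abs_moebius_le_one
  have hd : x / d ≤ y / d := by gcongr
  calc |(μ d : ℝ) * (Finset.Icc ⌈x / d⌉ ⌊y / d⌋).card - (y - x) * (μ d / d)|
      = |(μ d : ℝ)| * |((Finset.Icc ⌈x / d⌉ ⌊y / d⌋).card : ℝ) - (y / d - x / d)| := by
        rw [← abs_mul]
        ring_nf
    _ ≤ 1 := mul_le_one₀ hμ (abs_nonneg _) (abs_card_Icc_ceil_floor_sub_le hd)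

end CoprimeCount

section DivisorSums

lemma sum_Ioc_sum_divisorsAntidiagonal {M : Type*} [AddCommMonoid M] (F : ℕ × ℕ → M) (N : ℕ) :
    ∑ q ∈ Finset.Ioc 0 N, ∑ p ∈ q.divisorsAntidiagonal, F p =
      ∑ p ∈ Finset.Ioc 0 N ×ˢ Finset.Ioc 0 N with p.1 * p.2 ≤ N, F p := by
  have hdivisors : ∀ q ∈ Finset.Ioc 0 N, ∑ p ∈ q.divisorsAntidiagonal, F p =
      ∑ p ∈ Finset.Ioc 0 N ×ˢ Finset.Ioc 0 N, if p.1 * p.2 = q then F p else 0 := fun q hq => by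
    obtain ⟨hq0, hqN⟩ := Finset.mem_Ioc.1 hq
    rw [Nat.divisorsAntidiagonal_eq_prod_filter_of_le hq0.ne' hqN, Finset.sum_filter]
  rw [Finset.sum_congr rfl hdivisors, Finset.sum_comm, Finset.sum_filter]
  refine Finset.sum_congr rfl fun p hp => ?_
  obtain ⟨h1, h2⟩ := Finset.mem_product.1 hp
  have hpos := Nat.mul_pos (Finset.mem_Ioc.1 h1).1 (Finset.mem_Ioc.1 h2).1
  simp only [Finset.sum_ite_eq, Finset.mem_Ioc, hpos, true_and]

lemma sum_card_divisors_div_le (N : ℕ) :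
    ∑ q ∈ Finset.Ioc 0 N, (q.divisors.card : ℝ) / q ≤ (1 + Real.log N) ^ 2 := by
  have hharmonic : ∑ k ∈ Finset.Ioc 0 N, (k : ℝ)⁻¹ ≤ 1 + Real.log N := by
    refine le_of_eq_of_le ?_ (harmonic_le_one_add_log N)
    rw [harmonic_eq_sum_Icc]
    push_cast
    rfl
  calc ∑ q ∈ Finset.Ioc 0 N, (q.divisors.card : ℝ) / q
      = ∑ q ∈ Finset.Ioc 0 N, ∑ p ∈ q.divisorsAntidiagonal, (p.1 : ℝ)⁻¹ * (p.2 : ℝ)⁻¹ := by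
        refine Finset.sum_congr rfl fun q _ => ?_
        have hterm : ∀ p ∈ q.divisorsAntidiagonal, (p.1 : ℝ)⁻¹ * (p.2 : ℝ)⁻¹ = (q : ℝ)⁻¹ :=
          fun p hp => by
            rw [← (Nat.mem_divisorsAntidiagonal.1 hp).1, Nat.cast_mul, mul_inv]
        rw [Finset.sum_congr rfl hterm, Finset.sum_const, nsmul_eq_mul, div_eq_mul_inv,
          ← Nat.map_div_right_divisors, Finset.card_map]
    _ ≤ ∑ p ∈ Finset.Ioc 0 N ×ˢ Finset.Ioc 0 N, (p.1 : ℝ)⁻¹ * (p.2 : ℝ)⁻¹ := by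
        rw [sum_Ioc_sum_divisorsAntidiagonal]
        exact Finset.sum_le_sum_of_subset_of_nonneg (Finset.filter_subset _ _)
          fun p _ _ => by positivity
    _ = (∑ k ∈ Finset.Ioc 0 N, (k : ℝ)⁻¹) ^ 2 := by
        rw [sq, Finset.sum_mul_sum, Finset.sum_product]
    _ ≤ (1 + Real.log N) ^ 2 := by gcongr

lemma sum_totient_div_mul_eq {g : ℕ → ℝ} {N : ℕ} (hg : ∀ n, N < n → g n = 0) :
    ∑ q ∈ Finset.Ioc 0 N, φ q / q * g q =
      ∑ d ∈ Finset.Ioc 0 N, μ d / d * ∑ k ∈ Finset.Ioc 0 N, g (d * k) := by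
  calc ∑ q ∈ Finset.Ioc 0 N, φ q / q * g q
      = ∑ q ∈ Finset.Ioc 0 N, ∑ p ∈ q.divisorsAntidiagonal, μ p.1 / p.1 * g (p.1 * p.2) := by
        refine Finset.sum_congr rfl fun q _ => ?_
        rw [← sum_divisors_moebius_div, Finset.sum_mul,
          ← Nat.sum_divisorsAntidiagonal (fun d _ => (μ d : ℝ) / d * g q)]
        exact Finset.sum_congr rfl fun p hp => by rw [(Nat.mem_divisorsAntidiagonal.1 hp).1]
    _ = ∑ p ∈ Finset.Ioc 0 N ×ˢ Finset.Ioc 0 N, μ p.1 / p.1 * g (p.1 * p.2) := by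
        rw [sum_Ioc_sum_divisorsAntidiagonal]
        refine Finset.sum_filter_of_ne fun p _ hp => ?_
        by_contra! hN
        exact hp (by rw [hg _ hN, mul_zero])
    _ = ∑ d ∈ Finset.Ioc 0 N, μ d / d * ∑ k ∈ Finset.Ioc 0 N, g (d * k) := by
        simp only [Finset.sum_product, Finset.mul_sum]

lemma tsum_moebius_div_sq : ∑' d : ℕ, (μ d : ℝ) / d ^ 2 = 6 / Real.pi ^ 2 := by
  have hre : 1 < (2 : ℂ).re := by norm_num
  have hLSeries : LSeries (fun n => ((μ n : ℤ) : ℂ)) 2 =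
      ((∑' d : ℕ, (μ d : ℝ) / d ^ 2 : ℝ) : ℂ) := by
    rw [LSeries, Complex.ofReal_tsum]
    refine tsum_congr fun d => ?_
    rcases d.eq_zero_or_pos with rfl | hd
    · simp
    · rw [LSeries.term_of_ne_zero hd.ne']
      norm_num
  have hmul := ArithmeticFunction.LSeries_zeta_mul_Lseries_moebius hre
  rw [ArithmeticFunction.LSeries_zeta_eq_riemannZeta hre, riemannZeta_two, hLSeries] at hmul
  have hmul' : Real.pi ^ 2 / 6 * ∑' d : ℕ, (μ d : ℝ) / d ^ 2 = 1 := by exact_mod_cast hmul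
  rw [eq_inv_of_mul_eq_one_right hmul', inv_div]

end DivisorSums

section TotientMean

variable {f : ℝ → ℝ}

lemma sum_Ioc_zero_eq_sum_range {M : Type*} [AddCommMonoid M] (g : ℕ → M) (N : ℕ) :
    ∑ k ∈ Finset.Ioc 0 N, g k = ∑ i ∈ Finset.range N, g (i + 1) := by
  rw [Finset.range_eq_Ico, Finset.sum_Ico_add' g 0 N 1]
  rfl

lemma integral_eq_integral_zero_one (hf : AntitoneOn f (Set.Ici 0)) (hf1 : ∀ u, 1 ≤ u → f u = 0)
    {T : ℝ} (hT : 1 ≤ T) : ∫ u in (0 : ℝ)..T, f u = ∫ u in (0 : ℝ)..1, f u := by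
  have hint {a b : ℝ} (ha : 0 ≤ a) (hab : a ≤ b) : IntervalIntegrable f volume a b :=
    (hf.mono fun u hu => ha.trans (Set.uIcc_of_le hab ▸ hu).1).intervalIntegrable
  have htail : ∫ u in (1 : ℝ)..T, f u = 0 := by
    rw [intervalIntegral.integral_congr fun u hu => hf1 u (Set.uIcc_of_le hT ▸ hu).1]
    exact intervalIntegral.integral_zero
  rw [← intervalIntegral.integral_add_adjacent_intervals (hint le_rfl zero_le_one)
    (hint zero_le_one hT), htail, add_zero]

lemma sum_mul_comp_mul_mem_Icc_integral (hf : AntitoneOn f (Set.Ici 0))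
    (hf1 : ∀ u, 1 ≤ u → f u = 0) {h : ℝ} (hh : 0 < h) {N : ℕ} (hN : 1 ≤ h * N) :
    ∑ k ∈ Finset.Ioc 0 N, h * f (h * k) ∈
      Set.Icc ((∫ u in (0 : ℝ)..1, f u) - h * f 0) (∫ u in (0 : ℝ)..1, f u) := by
  have hanti : AntitoneOn (fun u => f (h * u)) (Set.Icc (0 : ℝ) (0 + N)) :=
    fun u hu v hv huv => hf (mul_nonneg hh.le hu.1) (mul_nonneg hh.le hv.1) (by gcongr)
  have hintegral : h * ∫ u in (0 : ℝ)..N, f (h * u) = ∫ u in (0 : ℝ)..1, f u := by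
    rw [intervalIntegral.mul_integral_comp_mul_left, mul_zero,
      integral_eq_integral_zero_one hf hf1 hN]
  have hle := hanti.sum_le_integral
  have hge := hanti.integral_le_sum
  simp only [zero_add] at hle hge
  have hshift : ∑ i ∈ Finset.range N, f (h * i) =
      ∑ i ∈ Finset.range N, f (h * (i + 1 : ℕ)) + f 0 := by
    have := Finset.sum_range_succ' (fun i : ℕ => f (h * i)) N
    rwa [Finset.sum_range_succ, hf1 _ hN, add_zero, Nat.cast_zero, mul_zero] at this
  rw [sum_Ioc_zero_eq_sum_range, ← Finset.mul_sum, ← hintegral, ← mul_sub]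
  exact ⟨by gcongr; linarith, by gcongr⟩

lemma sum_totient_div_mul_comp_mul_eq_tsum (hf1 : ∀ u, 1 ≤ u → f u = 0) {t : ℝ} (ht : 0 < t)
    {N : ℕ} (hN : 1 ≤ t * N) :
    ∑ q ∈ Finset.Ioc 0 N, φ q / q * (t * f (t * q)) =
      ∑' d : ℕ, μ d / (d : ℝ) ^ 2 * ∑ k ∈ Finset.Ioc 0 N, t * d * f (t * d * k) := by
  have hvanish {n : ℕ} (hn : N ≤ n) : f (t * n) = 0 := hf1 _ (hN.trans (by gcongr))
  rw [sum_totient_div_mul_eq (g := fun n => t * f (t * n))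
    fun n hn => by rw [hvanish hn.le, mul_zero], tsum_eq_sum (s := Finset.Ioc 0 N)]
  · refine Finset.sum_congr rfl fun d hd => ?_
    have hd0 : (d : ℝ) ≠ 0 := by exact_mod_cast (Finset.mem_Ioc.1 hd).1.ne'
    simp only [Finset.mul_sum, Nat.cast_mul, mul_assoc]
    refine Finset.sum_congr rfl fun k _ => ?_
    field_simp
  · intro d hd
    rcases d.eq_zero_or_pos with rfl | hd0
    · simp
    have hdN : N ≤ d := by
      rw [Finset.mem_Ioc] at hd
      omega
    refine mul_eq_zero_of_right _ (Finset.sum_eq_zero fun k hk => ?_)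
    have hk : N ≤ d * k := hdN.trans (Nat.le_mul_of_pos_right d (Finset.mem_Ioc.1 hk).1)
    rw [mul_assoc t d k, ← Nat.cast_mul, hvanish hk, mul_zero]

lemma sum_mul_natCast_mul_comp_mem_Icc_integral (hf : AntitoneOn f (Set.Ici 0))
    (hf1 : ∀ u, 1 ≤ u → f u = 0) {t : ℝ} (ht : 0 < t) {N : ℕ} (hN : 1 ≤ t * N) {d : ℕ}
    (hd : 0 < d) :
    ∑ k ∈ Finset.Ioc 0 N, t * d * f (t * d * k) ∈
      Set.Icc ((∫ u in (0 : ℝ)..1, f u) - t * d * f 0) (∫ u in (0 : ℝ)..1, f u) := by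
  refine sum_mul_comp_mul_mem_Icc_integral hf hf1 (by positivity) (hN.trans ?_)
  gcongr
  exact le_mul_of_one_le_right ht.le (by exact_mod_cast hd)

lemma norm_moebius_div_sq_mul_sum_le (hf : AntitoneOn f (Set.Ici 0))
    (hf1 : ∀ u, 1 ≤ u → f u = 0) {t : ℝ} (ht : 0 < t) {N : ℕ} (hN : 1 ≤ t * N) (d : ℕ) :
    ‖μ d / (d : ℝ) ^ 2 * ∑ k ∈ Finset.Ioc 0 N, t * d * f (t * d * k)‖ ≤
      1 / (d : ℝ) ^ 2 * ∫ u in (0 : ℝ)..1, f u := by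
  rcases d.eq_zero_or_pos with rfl | hd
  · simp
  have hμ : |(μ d : ℝ)| ≤ 1 := by exact_mod_cast ArithmeticFunction.abs_moebius_le_one
  have hfnonneg {u : ℝ} (hu : 0 ≤ u) : 0 ≤ f u := by
    rw [← hf1 (max u 1) (le_max_right u 1)]
    exact hf hu (hu.trans (le_max_left u 1)) (le_max_left u 1)
  have hnonneg : 0 ≤ ∑ k ∈ Finset.Ioc 0 N, t * d * f (t * d * k) :=
    Finset.sum_nonneg fun k _ => mul_nonneg (by positivity) (hfnonneg (by positivity))
  rw [norm_mul, norm_div, Real.norm_of_nonneg hnonneg, norm_pow, Real.norm_natCast]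
  gcongr
  exacts [hμ, (sum_mul_natCast_mul_comp_mem_Icc_integral hf hf1 ht hN hd).2]

lemma tendsto_sum_mul_natCast_mul_comp (hf : AntitoneOn f (Set.Ici 0))
    (hf1 : ∀ u, 1 ≤ u → f u = 0) {N : ℝ → ℕ} (hN : ∀ t, 0 < t → 1 ≤ t * N t) {d : ℕ}
    (hd : 0 < d) :
    Tendsto (fun t => ∑ k ∈ Finset.Ioc 0 (N t), t * d * f (t * d * k)) (𝓝[>] 0)
      (𝓝 (∫ u in (0 : ℝ)..1, f u)) := by
  have hmem : ∀ᶠ t in 𝓝[>] 0, ∑ k ∈ Finset.Ioc 0 (N t), t * d * f (t * d * k) ∈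
      Set.Icc ((∫ u in (0 : ℝ)..1, f u) - t * d * f 0) (∫ u in (0 : ℝ)..1, f u) := by
    filter_upwards [self_mem_nhdsWithin] with t ht
    exact sum_mul_natCast_mul_comp_mem_Icc_integral hf hf1 ht (hN t ht) hd
  have hlower : Tendsto (fun t => (∫ u in (0 : ℝ)..1, f u) - t * d * f 0) (𝓝[>] 0)
      (𝓝 (∫ u in (0 : ℝ)..1, f u)) :=
    tendsto_nhdsWithin_of_tendsto_nhds (Continuous.tendsto' (by fun_prop) _ _ (by simp))
  exact tendsto_of_tendsto_of_tendsto_of_le_of_le' hlower tendsto_const_nhds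
    (hmem.mono fun _ h => h.1) (hmem.mono fun _ h => h.2)

theorem tendsto_sum_totient_div_mul_comp_mul (hf : AntitoneOn f (Set.Ici 0))
    (hf1 : ∀ u, 1 ≤ u → f u = 0) {N : ℝ → ℕ} (hN : ∀ t, 0 < t → 1 ≤ t * N t) :
    Tendsto (fun t => ∑ q ∈ Finset.Ioc 0 (N t), φ q / q * (t * f (t * q))) (𝓝[>] 0)
      (𝓝 (6 / Real.pi ^ 2 * ∫ u in (0 : ℝ)..1, f u)) := by
  have hdom : ∀ᶠ t in 𝓝[>] 0, ∀ d : ℕ,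
      ‖μ d / (d : ℝ) ^ 2 * ∑ k ∈ Finset.Ioc 0 (N t), t * d * f (t * d * k)‖ ≤
        1 / (d : ℝ) ^ 2 * ∫ u in (0 : ℝ)..1, f u := by
    filter_upwards [self_mem_nhdsWithin] with t ht
    exact norm_moebius_div_sq_mul_sum_le hf hf1 ht (hN t ht)
  have hlim (d : ℕ) :
      Tendsto (fun t => μ d / (d : ℝ) ^ 2 * ∑ k ∈ Finset.Ioc 0 (N t), t * d * f (t * d * k))
        (𝓝[>] 0) (𝓝 (μ d / (d : ℝ) ^ 2 * ∫ u in (0 : ℝ)..1, f u)) := by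
    rcases d.eq_zero_or_pos with rfl | hd
    · simp
    · exact (tendsto_sum_mul_natCast_mul_comp hf hf1 hN hd).const_mul _
  have hsummable : Summable fun d : ℕ => 1 / (d : ℝ) ^ 2 * ∫ u in (0 : ℝ)..1, f u :=
    (Real.summable_one_div_nat_pow.2 one_lt_two).mul_right _
  rw [← tsum_moebius_div_sq, ← tsum_mul_right]
  refine (tendsto_tsum_of_dominated_convergence hsummable hlim hdom).congr' ?_
  filter_upwards [self_mem_nhdsWithin] with t ht
  exact (sum_totient_div_mul_comp_mul_eq_tsum hf1 ht (hN t ht)).symm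

end TotientMean

section FareyFractions

variable {A B : ℝ} {N : ℕ}

lemma num_and_den_div_of_gcd_eq_one {a : ℤ} {q : ℕ} (hq : 0 < q) (h : Int.gcd a q = 1) :
    ((a : ℚ) / q).num = a ∧ ((a : ℚ) / q).den = q := by
  have hq' : (0 : ℤ) < q := by exact_mod_cast hq
  exact ⟨by exact_mod_cast Rat.num_div_eq_of_coprime hq' h,
    by exact_mod_cast Rat.den_div_eq_of_coprime hq' h⟩

/-- The rationals in `[A, B]` of denominator at most `N`, listed through their reduced
representations `a / q`. -/
noncomputable def fareyIcc (A B : ℝ) (N : ℕ) : Finset ℚ :=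
  ((Finset.Ioc 0 N).sigma fun q => coprimeIcc (q * A) (q * B) q).image fun p => (p.2 : ℚ) / p.1

lemma mem_fareyIcc {r : ℚ} : r ∈ fareyIcc A B N ↔ r.den ≤ N ∧ A ≤ r ∧ r ≤ B := by
  simp only [fareyIcc, Finset.mem_image, Finset.mem_sigma, Finset.mem_Ioc, mem_coprimeIcc]
  constructor
  · rintro ⟨⟨q, a⟩, ⟨⟨hq, hqN⟩, ⟨hA, hB⟩, hgcd⟩, rfl⟩
    have hq' : (0 : ℝ) < q := by exact_mod_cast hq
    refine ⟨(num_and_den_div_of_gcd_eq_one hq hgcd).2.trans_le hqN, ?_⟩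
    push_cast
    rw [le_div_iff₀' hq', div_le_iff₀' hq']
    exact ⟨hA, hB⟩
  · rintro ⟨hN, hA, hB⟩
    have hden : (0 : ℝ) < r.den := by exact_mod_cast r.den_pos
    refine ⟨⟨r.den, r.num⟩, ⟨⟨r.den_pos, hN⟩, ?_, r.reduced⟩, r.num_div_den⟩
    rw [Rat.cast_def] at hA hB
    rwa [← le_div_iff₀' hden, ← div_le_iff₀' hden, and_iff_left hB]

lemma sum_fareyIcc_den {M : Type*} [AddCommMonoid M] (A B : ℝ) (N : ℕ) (g : ℕ → M) :
    ∑ r ∈ fareyIcc A B N, g r.den =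
      ∑ q ∈ Finset.Ioc 0 N, (coprimeIcc (q * A) (q * B) q).card • g q := by
  have hreduced : ∀ p ∈ (Finset.Ioc 0 N).sigma fun q : ℕ => coprimeIcc (q * A) (q * B) q,
      ((p.2 : ℚ) / p.1).num = p.2 ∧ ((p.2 : ℚ) / p.1).den = p.1 := fun p hp =>
    num_and_den_div_of_gcd_eq_one (Finset.mem_Ioc.1 (Finset.mem_sigma.1 hp).1).1
      (mem_coprimeIcc.1 (Finset.mem_sigma.1 hp).2).2
  have hinj : Set.InjOn (fun p : Σ _ : ℕ, ℤ => (p.2 : ℚ) / p.1)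
      ((Finset.Ioc 0 N).sigma fun q : ℕ => coprimeIcc (q * A) (q * B) q) := by
    rintro ⟨q, a⟩ hp ⟨q', a'⟩ hp' (heq : (a : ℚ) / q = a' / q')
    obtain ⟨hnum, hden⟩ := hreduced _ hp
    obtain ⟨hnum', hden'⟩ := hreduced _ hp'
    simp only [heq] at hnum hden
    simp only [hnum'] at hnum
    simp only [hden'] at hden
    subst hnum hden
    rfl
  rw [fareyIcc, Finset.sum_image hinj,
    Finset.sum_congr rfl fun p hp => congrArg g (hreduced p hp).2, Finset.sum_sigma]
  simp only [Finset.sum_const]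

lemma one_div_den_mul_den_le_abs_sub {r s : ℚ} (h : r ≠ s) :
    1 / ((r.den : ℝ) * s.den) ≤ |(r : ℝ) - s| := by
  have hr : (0 : ℝ) < r.den := by exact_mod_cast r.den_pos
  have hs : (0 : ℝ) < s.den := by exact_mod_cast s.den_pos
  have hdet : r.num * s.den - r.den * s.num ≠ 0 := fun h0 =>
    h (Rat.eq_iff_mul_eq_mul.2 (by linarith))
  have hsub : (r : ℝ) - s = (r.num * s.den - r.den * s.num : ℤ) / (r.den * s.den) := by
    rw [Rat.cast_def r, Rat.cast_def s, div_sub_div _ _ hr.ne' hs.ne']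
    push_cast
    rfl
  rw [hsub, abs_div, abs_of_pos (mul_pos hr hs), ← Int.cast_abs]
  gcongr
  exact_mod_cast Int.one_le_abs hdet

end FareyFractions

section FordChords

variable {ε : ℝ} {q r : ℕ}

/-- Half the length of the chord cut out of a Ford disk of denominator `q` by the horizontal line
at height `ε`. It is `0` when `1 < ε * q ^ 2`, that is, when the line passes above the disk. -/
noncomputable def fordHalfWidth (ε : ℝ) (q : ℕ) : ℝ := √ε / q * √(1 - ε * q ^ 2)

lemma fordHalfWidth_nonneg (ε : ℝ) (q : ℕ) : 0 ≤ fordHalfWidth ε q := by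
  unfold fordHalfWidth
  positivity

lemma fordHalfWidth_le_sqrt_div (hε : 0 ≤ ε) (q : ℕ) : fordHalfWidth ε q ≤ √ε / q := by
  refine mul_le_of_le_one_right (by positivity) (Real.sqrt_le_one.2 ?_)
  rw [sub_le_self_iff]
  positivity

lemma fordHalfWidth_le_sqrt (hε : 0 ≤ ε) (hq : 0 < q) : fordHalfWidth ε q ≤ √ε :=
  (fordHalfWidth_le_sqrt_div hε q).trans
    (div_le_self (Real.sqrt_nonneg ε) (by exact_mod_cast hq))

lemma mul_sq_le_one_of_fordHalfWidth_pos (h : 0 < fordHalfWidth ε q) : ε * q ^ 2 ≤ 1 := by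
  by_contra! hlt
  rw [fordHalfWidth, Real.sqrt_eq_zero_of_nonpos (by linarith : 1 - ε * q ^ 2 ≤ 0), mul_zero] at h
  exact h.false

lemma sq_fordHalfWidth (hε : 0 ≤ ε) (h : ε * q ^ 2 ≤ 1) :
    fordHalfWidth ε q ^ 2 = ε / q ^ 2 * (1 - ε * q ^ 2) := by
  rw [fordHalfWidth, mul_pow, div_pow, Real.sq_sqrt hε, Real.sq_sqrt (sub_nonneg.2 h)]

lemma mem_fordDisk_iff (hε : 0 < ε) (hq : 0 < q) (x c : ℝ) :
    (x - c) ^ 2 + (ε - 1 / (2 * (q : ℝ) ^ 2)) ^ 2 ≤ 1 / (4 * (q : ℝ) ^ 4) ↔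
      ε * q ^ 2 ≤ 1 ∧ |x - c| ≤ fordHalfWidth ε q := by
  have hsquare : (ε - 1 / (2 * (q : ℝ) ^ 2)) ^ 2 =
      1 / (4 * (q : ℝ) ^ 4) - ε / q ^ 2 * (1 - ε * q ^ 2) := by
    field_simp
    ring
  have hchord : (x - c) ^ 2 + (ε - 1 / (2 * (q : ℝ) ^ 2)) ^ 2 ≤ 1 / (4 * (q : ℝ) ^ 4) ↔
      (x - c) ^ 2 ≤ ε / q ^ 2 * (1 - ε * q ^ 2) := by
    rw [hsquare]
    constructor <;> intro h <;> linarith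
  rw [hchord]
  constructor
  · intro h
    have hmeets : ε * q ^ 2 ≤ 1 :=
      sub_nonneg.1 (nonneg_of_mul_nonneg_right ((sq_nonneg _).trans h) (by positivity))
    rw [← sq_fordHalfWidth hε.le hmeets] at h
    exact ⟨hmeets, abs_le_of_sq_le_sq h (fordHalfWidth_nonneg ε q)⟩
  · rintro ⟨hmeets, h⟩
    rw [← sq_fordHalfWidth hε.le hmeets]
    exact sq_le_sq' (abs_le.1 h).1 (abs_le.1 h).2

-- With `√ε * q = sin u` and `√ε * r = sin v` this says `sin (u + v) ≤ 1`.
lemma fordHalfWidth_add_le (hε : 0 ≤ ε) (hq : 0 < q) (hr : 0 < r) (hq1 : ε * q ^ 2 ≤ 1)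
    (hr1 : ε * r ^ 2 ≤ 1) : fordHalfWidth ε q + fordHalfWidth ε r ≤ 1 / ((q : ℝ) * r) := by
  have hsum : fordHalfWidth ε q + fordHalfWidth ε r =
      (√ε * r * √(1 - ε * q ^ 2) + √ε * q * √(1 - ε * r ^ 2)) / (q * r) := by
    unfold fordHalfWidth
    field_simp
  have hamgm {a b : ℕ} (ha : ε * a ^ 2 ≤ 1) :
      2 * (√ε * b * √(1 - ε * a ^ 2)) ≤ ε * b ^ 2 + (1 - ε * a ^ 2) := by
    have h := two_mul_le_add_sq (√ε * b) √(1 - ε * a ^ 2)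
    rwa [mul_pow, Real.sq_sqrt hε, Real.sq_sqrt (sub_nonneg.2 ha), mul_assoc] at h
  rw [hsum]
  gcongr
  linarith [hamgm (b := r) hq1, hamgm (b := q) hr1]

lemma pairwise_disjoint_ball_fordHalfWidth (hε : 0 ≤ ε) :
    Pairwise (Function.onFun Disjoint fun s : ℚ =>
      Metric.ball (s : ℝ) (fordHalfWidth ε s.den)) := by
  intro s s' hne
  refine Set.disjoint_left.2 fun x hx hx' => ?_
  have hsum := fordHalfWidth_add_le hε s.den_pos s'.den_pos
    (mul_sq_le_one_of_fordHalfWidth_pos (Metric.pos_of_mem_ball hx))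
    (mul_sq_le_one_of_fordHalfWidth_pos (Metric.pos_of_mem_ball hx'))
  have hdist : dist (s : ℝ) s' < fordHalfWidth ε s.den + fordHalfWidth ε s'.den :=
    (dist_triangle_left _ _ x).trans_lt (add_lt_add hx hx')
  exact (hdist.trans_le hsum).not_ge (one_div_den_mul_den_le_abs_sub hne)

end FordChords

section SliceLength

variable {ε : ℝ} {N : ℕ}

/-- The total length of the chords at height `ε` of the Ford disks of denominator at most `N`
tangent to a half-open unit interval, there being `φ q` of them for each denominator `q`. -/
noncomputable def fordDensity (ε : ℝ) (N : ℕ) : ℝ :=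
  ∑ q ∈ Finset.Ioc 0 N, 2 * fordHalfWidth ε q * φ q

lemma fordDensity_nonneg (ε : ℝ) (N : ℕ) : 0 ≤ fordDensity ε N :=
  Finset.sum_nonneg fun q _ =>
    mul_nonneg (mul_nonneg zero_le_two (fordHalfWidth_nonneg ε q)) (Nat.cast_nonneg _)

lemma abs_card_coprimeIcc_smul_fordHalfWidth_sub_le (hε : 0 ≤ ε) {A B : ℝ} (hAB : A ≤ B)
    {q : ℕ} (hq : q ≠ 0) :
    |(coprimeIcc (q * A) (q * B) q).card • (2 * fordHalfWidth ε q) -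
      (B - A) * (2 * fordHalfWidth ε q * φ q)| ≤ 2 * √ε * (q.divisors.card / q) := by
  have hcount := abs_card_coprimeIcc_sub_le (q := q)
    (mul_le_mul_of_nonneg_left hAB (Nat.cast_nonneg q)) hq
  have hchord : 0 ≤ 2 * fordHalfWidth ε q := mul_nonneg zero_le_two (fordHalfWidth_nonneg ε q)
  calc |(coprimeIcc (q * A) (q * B) q).card • (2 * fordHalfWidth ε q) -
        (B - A) * (2 * fordHalfWidth ε q * φ q)|
      = |2 * fordHalfWidth ε q *
          ((coprimeIcc (q * A) (q * B) q).card - (q * B - q * A) * (φ q / q))| := by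
        rw [nsmul_eq_mul]
        congr 1
        field_simp
    _ = 2 * fordHalfWidth ε q *
          |((coprimeIcc (q * A) (q * B) q).card : ℝ) - (q * B - q * A) * (φ q / q)| := by
        rw [abs_mul, abs_of_nonneg hchord]
    _ ≤ 2 * (√ε / q) * q.divisors.card := by
        gcongr
        exact fordHalfWidth_le_sqrt_div hε q
    _ = 2 * √ε * (q.divisors.card / q) := by ring

lemma abs_sum_fareyIcc_sub_le (hε : 0 ≤ ε) {A B : ℝ} (hAB : A ≤ B) (N : ℕ) :
    |∑ s ∈ fareyIcc A B N, 2 * fordHalfWidth ε s.den - (B - A) * fordDensity ε N| ≤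
      2 * √ε * (1 + Real.log N) ^ 2 := by
  rw [sum_fareyIcc_den A B N fun q => 2 * fordHalfWidth ε q, fordDensity, Finset.mul_sum,
    ← Finset.sum_sub_distrib]
  calc |∑ q ∈ Finset.Ioc 0 N, ((coprimeIcc (q * A) (q * B) q).card • (2 * fordHalfWidth ε q) -
        (B - A) * (2 * fordHalfWidth ε q * φ q))|
      ≤ ∑ q ∈ Finset.Ioc 0 N, 2 * √ε * (q.divisors.card / q) :=
        (Finset.abs_sum_le_sum_abs _ _).trans (Finset.sum_le_sum fun q hq =>
          abs_card_coprimeIcc_smul_fordHalfWidth_sub_le hε hAB (Finset.mem_Ioc.1 hq).1.ne')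
    _ ≤ 2 * √ε * (1 + Real.log N) ^ 2 := by
        rw [← Finset.mul_sum]
        gcongr
        exact sum_card_divisors_div_le N

lemma mem_fordSetAB_iff (hε : 0 < ε) {α β : ℝ → ℝ} {x : ℝ} :
    x ∈ fordSetAB α β ε ↔ x ∈ Set.Icc (α ε) (β ε) ∧
      ∃ s : ℚ, ε * s.den ^ 2 ≤ 1 ∧ x ∈ Metric.closedBall (s : ℝ) (fordHalfWidth ε s.den) := by
  refine and_congr_right fun _ => ⟨?_, ?_⟩
  · rintro ⟨a, q, hq, hgcd, hx⟩
    lift q to ℕ using by omega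
    have hq0 : 0 < q := by omega
    refine ⟨a / q, ?_⟩
    rw [(num_and_den_div_of_gcd_eq_one hq0 hgcd).2]
    push_cast at hx ⊢
    exact (mem_fordDisk_iff hε hq0 x _).1 hx
  · rintro ⟨s, hs⟩
    refine ⟨s.num, s.den, by exact_mod_cast s.den_pos, s.reduced, ?_⟩
    rw [Int.cast_natCast, ← Rat.cast_def]
    exact (mem_fordDisk_iff hε s.den_pos x s).2 hs

lemma den_le_of_mul_sq_le_one (hε : 0 < ε) (hN : 1 ≤ √ε * N) {q : ℕ} (hq : ε * q ^ 2 ≤ 1) :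
    q ≤ N := by
  have hle : √ε * q ≤ 1 := by
    rw [← Real.sq_sqrt hε.le, ← mul_pow] at hq
    exact (sq_le_one_iff₀ (by positivity)).1 hq
  exact_mod_cast le_of_mul_le_mul_left (hle.trans hN) (Real.sqrt_pos.2 hε)

lemma volume_fordSetAB_toReal_le (hε : 0 < ε) (hN : 1 ≤ √ε * N) (α β : ℝ → ℝ) :
    (volume (fordSetAB α β ε)).toReal ≤
      ∑ s ∈ fareyIcc (α ε - √ε) (β ε + √ε) N, 2 * fordHalfWidth ε s.den := by
  have hcover : fordSetAB α β ε ⊆ ⋃ s ∈ fareyIcc (α ε - √ε) (β ε + √ε) N,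
      Metric.closedBall (s : ℝ) (fordHalfWidth ε s.den) := by
    intro x hx
    obtain ⟨hx, s, hs, hxs⟩ := (mem_fordSetAB_iff hε).1 hx
    have hnear := abs_le.1 (hxs.trans (fordHalfWidth_le_sqrt hε.le s.den_pos))
    exact Set.mem_biUnion (mem_fareyIcc.2 ⟨den_le_of_mul_sq_le_one hε hN hs,
      by linarith [hx.1], by linarith [hx.2]⟩) hxs
  have hnonneg (s : ℚ) : 0 ≤ 2 * fordHalfWidth ε s.den :=
    mul_nonneg zero_le_two (fordHalfWidth_nonneg _ _)
  refine ENNReal.toReal_le_of_le_ofReal (Finset.sum_nonneg fun s _ => hnonneg s) ?_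
  rw [ENNReal.ofReal_sum_of_nonneg fun s _ => hnonneg s]
  refine ((measure_mono hcover).trans (measure_biUnion_finset_le _ _)).trans_eq ?_
  simp only [Real.volume_closedBall]

lemma le_volume_fordSetAB_toReal (hε : 0 < ε) (N : ℕ) (α β : ℝ → ℝ) :
    ∑ s ∈ fareyIcc (α ε + √ε) (β ε - √ε) N, 2 * fordHalfWidth ε s.den ≤
      (volume (fordSetAB α β ε)).toReal := by
  have hsubset : ⋃ s ∈ fareyIcc (α ε + √ε) (β ε - √ε) N,
      Metric.ball (s : ℝ) (fordHalfWidth ε s.den) ⊆ fordSetAB α β ε := by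
    refine Set.iUnion₂_subset fun s hs x hx => (mem_fordSetAB_iff hε).2 ?_
    obtain ⟨-, hA, hB⟩ := mem_fareyIcc.1 hs
    have hxs := Metric.ball_subset_closedBall hx
    have hnear := abs_le.1 (hxs.trans (fordHalfWidth_le_sqrt hε.le s.den_pos))
    exact ⟨⟨by linarith, by linarith⟩, s,
      mul_sq_le_one_of_fordHalfWidth_pos (Metric.pos_of_mem_ball hx), hxs⟩
  have hfinite : volume (fordSetAB α β ε) ≠ ⊤ :=
    measure_ne_top_of_subset (fun _ hx => hx.1) measure_Icc_lt_top.ne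
  rw [← ENNReal.ofReal_le_iff_le_toReal hfinite, ENNReal.ofReal_sum_of_nonneg fun s _ =>
    mul_nonneg zero_le_two (fordHalfWidth_nonneg _ _)]
  refine le_of_eq_of_le ?_ (measure_mono hsubset)
  rw [measure_biUnion_finset ((pairwise_disjoint_ball_fordHalfWidth hε.le).set_pairwise _)
    fun _ _ => Metric.isOpen_ball.measurableSet]
  simp only [Real.volume_ball]

theorem abs_volume_fordSetAB_sub_le (hε : 0 < ε) (hN : 1 ≤ √ε * N) {α β : ℝ → ℝ}
    (hαβ : α ε ≤ β ε) :
    |(volume (fordSetAB α β ε)).toReal - (β ε - α ε) * fordDensity ε N| ≤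
      2 * √ε * (fordDensity ε N + (1 + Real.log N) ^ 2) := by
  have hsqrt := Real.sqrt_nonneg ε
  rw [abs_le]
  constructor
  · rcases le_total (α ε + √ε) (β ε - √ε) with hlong | hshort
    · have hsum := (abs_le.1 (abs_sum_fareyIcc_sub_le hε.le hlong N)).1
      linarith [le_volume_fordSetAB_toReal hε N α β]
    · have hdensity := mul_le_mul_of_nonneg_right
        (by linarith : β ε - α ε ≤ 2 * √ε) (fordDensity_nonneg ε N)
      have herror : 0 ≤ 2 * √ε * (1 + Real.log N) ^ 2 := by positivity
      linarith [ENNReal.toReal_nonneg (a := volume (fordSetAB α β ε))]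
  · have hsum := (abs_le.1 (abs_sum_fareyIcc_sub_le hε.le
      (by linarith : α ε - √ε ≤ β ε + √ε) N)).2
    linarith [volume_fordSetAB_toReal_le hε hN α β]

end SliceLength

section Asymptotics

lemma one_le_mul_natCeil_inv {t : ℝ} (ht : 0 < t) : 1 ≤ t * ⌈t⁻¹⌉₊ :=
  (mul_inv_cancel₀ ht.ne').symm.le.trans (by gcongr; exact Nat.le_ceil _)

lemma integral_zero_one_sqrt_one_sub_sq : ∫ u in (0 : ℝ)..1, √(1 - u ^ 2) = Real.pi / 4 := by
  have hint (a b : ℝ) : IntervalIntegrable (fun u : ℝ => √(1 - u ^ 2)) volume a b :=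
    Continuous.intervalIntegrable (by fun_prop) a b
  have heven : ∫ u in (-1 : ℝ)..0, √(1 - u ^ 2) = ∫ u in (0 : ℝ)..1, √(1 - u ^ 2) := by
    have hneg := intervalIntegral.integral_comp_neg (a := 0) (b := 1)
      fun u : ℝ => √(1 - u ^ 2)
    simp only [neg_sq, neg_zero] at hneg
    exact hneg.symm
  have hhalves := intervalIntegral.integral_add_adjacent_intervals (hint (-1) 0) (hint 0 1)
  rw [heven, integral_sqrt_one_sub_sq] at hhalves
  linarith

lemma fordDensity_eq {ε : ℝ} (hε : 0 ≤ ε) (N : ℕ) :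
    fordDensity ε N =
      2 * ∑ q ∈ Finset.Ioc 0 N, φ q / q * (√ε * √(1 - (√ε * q) ^ 2)) := by
  rw [fordDensity, Finset.mul_sum]
  refine Finset.sum_congr rfl fun q _ => ?_
  rw [fordHalfWidth, mul_pow, Real.sq_sqrt hε]
  ring

theorem tendsto_fordDensity :
    Tendsto (fun ε => fordDensity ε ⌈(√ε)⁻¹⌉₊) (𝓝[>] 0) (𝓝 (3 / Real.pi)) := by
  have hanti : AntitoneOn (fun u : ℝ => √(1 - u ^ 2)) (Set.Ici 0) :=
    fun u (hu : 0 ≤ u) v _ huv => Real.sqrt_le_sqrt (by gcongr)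
  have hvanish (u : ℝ) (hu : 1 ≤ u) : √(1 - u ^ 2) = 0 :=
    Real.sqrt_eq_zero_of_nonpos (sub_nonpos.2 (one_le_pow₀ hu))
  have hsqrt : Tendsto (√·) (𝓝[>] 0) (𝓝[>] 0) :=
    tendsto_nhdsWithin_iff.2
      ⟨tendsto_nhdsWithin_of_tendsto_nhds (Real.continuous_sqrt.tendsto' 0 0 Real.sqrt_zero),
        eventually_mem_nhdsWithin.mono fun _ => Real.sqrt_pos.2⟩
  have hmean := ((tendsto_sum_totient_div_mul_comp_mul hanti hvanish
    fun _ => one_le_mul_natCeil_inv).comp hsqrt).const_mul 2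
  have hvalue : 2 * (6 / Real.pi ^ 2 * ∫ u in (0 : ℝ)..1, √(1 - u ^ 2)) = 3 / Real.pi := by
    rw [integral_zero_one_sqrt_one_sub_sq]
    field_simp
    norm_num
  rw [hvalue] at hmean
  exact hmean.congr' (eventually_mem_nhdsWithin.mono fun ε hε =>
    (fordDensity_eq (Set.mem_Ioi.1 hε).le _).symm)

lemma eventually_one_add_log_natCeil_inv_sqrt_le :
    ∀ᶠ ε in 𝓝[>] 0, 1 + Real.log ⌈(√ε)⁻¹⌉₊ ≤ -Real.log ε := by
  filter_upwards [Real.tendsto_log_nhdsGT_zero.eventually_le_atBot (-4),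
    Ioo_mem_nhdsGT zero_lt_one] with ε hlog ⟨hε0, hε1⟩
  have hsqrt : 0 < √ε := Real.sqrt_pos.2 hε0
  have hone : 1 ≤ (√ε)⁻¹ := (one_le_inv₀ hsqrt).2 (Real.sqrt_le_one.2 hε1.le)
  have hceil : (⌈(√ε)⁻¹⌉₊ : ℝ) ≤ 2 * (√ε)⁻¹ := by
    linarith [Nat.ceil_lt_add_one (inv_nonneg.2 hsqrt.le)]
  have hpos : (0 : ℝ) < ⌈(√ε)⁻¹⌉₊ := by
    exact_mod_cast Nat.ceil_pos.2 (inv_pos.2 hsqrt)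
  have hlogceil := Real.log_le_log hpos hceil
  rw [Real.log_mul two_ne_zero (inv_ne_zero hsqrt.ne'), Real.log_inv,
    Real.log_sqrt hε0.le] at hlogceil
  linarith [Real.log_two_lt_d9]

lemma volume_fordSetAB_sub_isBigO {α β : ℝ → ℝ} (hαβ : ∀ᶠ ε in 𝓝[>] 0, α ε ≤ β ε) :
    (fun ε => (volume (fordSetAB α β ε)).toReal - (β ε - α ε) * fordDensity ε ⌈(√ε)⁻¹⌉₊)
      =O[𝓝[>] 0] fun ε => √ε * Real.log ε ^ 2 := by
  have hdensity : ∀ᶠ ε in 𝓝[>] 0, fordDensity ε ⌈(√ε)⁻¹⌉₊ ≤ 1 :=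
    tendsto_fordDensity.eventually_le_const ((div_lt_one Real.pi_pos).2 Real.pi_gt_three)
  refine IsBigO.of_bound 4 ?_
  filter_upwards [hαβ, hdensity, eventually_one_add_log_natCeil_inv_sqrt_le,
    Real.tendsto_log_nhdsGT_zero.eventually_le_atBot (-1), self_mem_nhdsWithin]
    with ε hle hM hlogN hlog hε
  have hsqlogN : (1 + Real.log ⌈(√ε)⁻¹⌉₊) ^ 2 ≤ Real.log ε ^ 2 := by
    rw [← neg_sq (Real.log ε)]
    have := Real.log_natCast_nonneg ⌈(√ε)⁻¹⌉₊
    gcongr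
  have hsqlog : 1 ≤ Real.log ε ^ 2 := by nlinarith
  rw [Real.norm_eq_abs, Real.norm_of_nonneg (by positivity)]
  calc |(volume (fordSetAB α β ε)).toReal - (β ε - α ε) * fordDensity ε ⌈(√ε)⁻¹⌉₊|
      ≤ 2 * √ε * (fordDensity ε ⌈(√ε)⁻¹⌉₊ + (1 + Real.log ⌈(√ε)⁻¹⌉₊) ^ 2) :=
        abs_volume_fordSetAB_sub_le hε (one_le_mul_natCeil_inv (Real.sqrt_pos.2 hε)) hle
    _ ≤ 2 * √ε * (Real.log ε ^ 2 + Real.log ε ^ 2) := by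
        gcongr
        exact hM.trans hsqlog
    _ = 4 * (√ε * Real.log ε ^ 2) := by ring

lemma sqrt_mul_log_sq_isLittleO_rpow {δ : ℝ} (hδ : 0 < δ) :
    (fun ε => √ε * Real.log ε ^ 2) =o[𝓝[>] 0] fun ε : ℝ => ε ^ ((1 : ℝ) / 2 - δ) := by
  have hlog := (isBigO_refl (√·) (𝓝[>] 0)).mul_isLittleO
    (isLittleO_abs_log_rpow_rpow_nhdsGT_zero 2 (neg_neg_of_pos hδ))
  refine hlog.congr' (Eventually.of_forall fun ε => by simp) ?_
  filter_upwards [self_mem_nhdsWithin] with ε hε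
  rw [Real.sqrt_eq_rpow, ← Real.rpow_add hε, sub_eq_add_neg]

lemma sqrt_mul_log_sq_isLittleO_of_rpow_le {δ : ℝ} (hδ : 0 < δ) {ℓ : ℝ → ℝ}
    (hℓ : ∀ᶠ ε in 𝓝[>] 0, ε ^ ((1 : ℝ) / 2 - δ) ≤ ℓ ε) :
    (fun ε => √ε * Real.log ε ^ 2) =o[𝓝[>] 0] ℓ := by
  refine (sqrt_mul_log_sq_isLittleO_rpow hδ).trans_isBigO (IsBigO.of_bound' ?_)
  filter_upwards [hℓ, self_mem_nhdsWithin] with ε hle hε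
  rw [Real.norm_of_nonneg (Real.rpow_pos_of_pos hε _).le]
  exact hle.trans (le_abs_self _)

theorem fordSet_shrinking_intervals_density_general {α β : ℝ → ℝ}
    (hlt : ∀ᶠ ε in 𝓝[>] 0, α ε < β ε)
    (hlen : (fun ε => √ε * Real.log ε ^ 2) =o[𝓝[>] 0] fun ε => β ε - α ε) :
    Tendsto (fun ε => (volume (fordSetAB α β ε)).toReal / (β ε - α ε)) (𝓝[>] 0)
      (𝓝 (3 / Real.pi)) := by
  have herror := ((volume_fordSetAB_sub_isBigO (hlt.mono fun _ => le_of_lt)).trans_isLittleO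
    hlen).tendsto_div_nhds_zero
  have hsum := herror.add tendsto_fordDensity
  rw [zero_add] at hsum
  refine hsum.congr' (hlt.mono fun ε hε => ?_)
  rw [sub_div, mul_div_cancel_left₀ _ (sub_pos.2 hε).ne', sub_add_cancel]

end Asymptotics

theorem fordSet_shrinking_intervals_density
    (δ : ℝ) (hδ : 0 < δ) (α β : ℝ → ℝ)
    (hαβ : ∀ ε : ℝ, ε ∈ Set.Ioo (0 : ℝ) 1 → ε ^ ((1 : ℝ) / 2 - δ) ≤ β ε - α ε) :
    Filter.Tendsto
      (fun ε : ℝ => (volume (fordSetAB α β ε)).toReal / (β ε - α ε))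
      (nhdsWithin 0 (Set.Ioi 0)) (nhds (3 / Real.pi)) := by
  have hlen := eventually_of_mem (Ioo_mem_nhdsGT zero_lt_one) hαβ
  exact fordSet_shrinking_intervals_density_general
    (by filter_upwards [hlen, self_mem_nhdsWithin] with ε hle hε using
      sub_pos.1 ((Real.rpow_pos_of_pos hε _).trans_le hle))
    (sqrt_mul_log_sq_isLittleO_of_rpow_le hδ hlen)
end

section
/- Let η be a Borel probability measure on [0,1] that is absolutely continuous with respect to Lebesgue measure, and let f : ℍ → ℝ be continuous, SL(2,ℤ)-invariant, and compactly supported in the quotient. Then lim_{ε→0⁺} ∫₀¹ f(x + iε) dη(x) = (3/π) · ∫_F f(x+iy) · y⁻² dx dy. -/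
open MeasureTheory Complex

/-- The standard fundamental domain for `SL(2,ℤ)` acting on the upper half-plane, viewed as a
subset of `ℝ × ℝ` (coordinates `(x, y)` with `z = x + iy`). -/
def fundDom : Set (ℝ × ℝ) :=
  {p | |p.1| < 1 / 2 ∧ 1 < p.1 ^ 2 + p.2 ^ 2 ∧ 0 < p.2}

/-!
Write `A(y)` for the integral of `f` over the closed horocycle at height `y`. Unfolding
`{0 ≤ x < 1, y > ε}` against the fundamental domain turns `∫_ε^∞ A(y) y⁻² dy` into the integral over
`F` of `f` times a count of primitive vectors in a disc, so the asymptotic density `6 / π²` of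
primitive vectors gives the limit of `ε ∫_ε^∞ A(y) y⁻² dy`. As `f` is uniformly continuous for the
hyperbolic metric, `A` varies slowly with `log y`, and the limit holds for `A` itself.

To localize on the horocycle, let `h` be `f` minus its mean. If `γ = (a b; c d)` has `|c|` much
smaller than `d`, the piece of the horocycle of height `ε` above the interval from `γ • 0` to
`γ • 1` lies hyperbolically close to the image under `γ` of the closed horocycle of height `ε d²`,
so the average of `h` over it tends to a small number as `ε → 0`. A limit `Φ(t)` of
`∫₀ᵗ h(x + iε) dx` along an ultrafilter is Lipschitz and has small slope over each such interval.
Dirichlet approximation provides, arbitrarily close to every irrational `x`, such intervals of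
length comparable to their distance from `x`; hence `Φ' = 0` wherever `Φ` is differentiable at an
irrational point, and `Φ = 0` by Rademacher's theorem.

Integration by parts upgrades this to smooth densities, and approximation in `L¹` to arbitrary ones.
-/

namespace Horocycle

open Filter Topology MatrixGroups
open UpperHalfPlane hiding I

/-- The point `x + iy` of the upper half-plane (junk value when `y ≤ 0`), which makes a function on
`ℍ` into a function of two real variables. -/
noncomputable def ofReIm (x y : ℝ) : ℍ := ofComplex (x + y * I)

lemma coe_ofReIm (x : ℝ) {y : ℝ} (hy : 0 < y) : (ofReIm x y : ℂ) = x + y * I :=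
  congrArg UpperHalfPlane.coe (ofComplex_apply_of_im_pos (by simpa using hy))

lemma ofReIm_re (x : ℝ) {y : ℝ} (hy : 0 < y) : (ofReIm x y).re = x := by
  simp [← coe_re, coe_ofReIm x hy]

lemma ofReIm_im (x : ℝ) {y : ℝ} (hy : 0 < y) : (ofReIm x y).im = y := by
  simp [← coe_im, coe_ofReIm x hy]

lemma ofReIm_re_im (z : ℍ) : ofReIm z.re z.im = z := by
  simp [ofReIm, UpperHalfPlane.re_add_im]

lemma continuousOn_ofReIm : ContinuousOn (fun p : ℝ × ℝ ↦ ofReIm p.1 p.2) {p | 0 < p.2} := by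
  rw [isEmbedding_coe.continuousOn_iff]
  have hcoe : Continuous fun p : ℝ × ℝ ↦ (p.1 + p.2 * I : ℂ) := by fun_prop
  exact hcoe.continuousOn.congr fun p hp ↦ coe_ofReIm p.1 hp

lemma continuous_ofReIm {y : ℝ} (hy : 0 < y) : Continuous (ofReIm · y) :=
  continuousOn_ofReIm.comp_continuous (f := fun x : ℝ ↦ (x, y)) (by fun_prop) fun _ ↦ hy

/-- A test function on the modular surface `SL(2, ℤ) \ ℍ`: continuous, and compactly supported on
the quotient, the latter being encoded as vanishing high up in the cusp. -/
structure IsModularTestFunction (g : ℍ → ℝ) : Prop where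
  continuous : Continuous g
  smul_eq (γ : SL(2, ℤ)) (z : ℍ) : g (γ • z) = g z
  exists_im_bound : ∃ Y : ℝ, ∀ z : ℍ, Y < z.im → g z = 0

namespace IsModularTestFunction

variable {g : ℍ → ℝ}

lemma exists_abs_le (hg : IsModularTestFunction g) : ∃ M : ℝ, ∀ z, |g z| ≤ M := by
  obtain ⟨Y, hY⟩ := hg.exists_im_bound
  obtain ⟨M, hM⟩ :=
    (ModularGroup.isCompact_truncatedFundamentalDomain Y).exists_bound_of_continuousOn
      hg.continuous.continuousOn
  refine ⟨max M 0, fun z ↦ ?_⟩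
  obtain ⟨γ, hγ⟩ := ModularGroup.exists_smul_mem_fd z
  rw [← hg.smul_eq γ z]
  rcases lt_or_ge Y (γ • z).im with hz | hz
  · rw [hY _ hz, abs_zero]
    exact le_max_right _ _
  · exact (hM _ ⟨hγ, hz⟩).trans (le_max_left _ _)

lemma uniformContinuous (hg : IsModularTestFunction g) : UniformContinuous g := by
  obtain ⟨Y, hY⟩ := hg.exists_im_bound
  rw [Metric.uniformContinuous_iff]
  intro e he
  obtain ⟨δ, hδ, hnear⟩ := Metric.mem_uniformity_dist.1 <|
    (ModularGroup.isCompact_truncatedFundamentalDomain Y).uniformContinuousAt_of_continuousAt g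
      (fun z _ ↦ hg.continuous.continuousAt) (Metric.dist_mem_uniformity he)
  have near_of_ne_zero : ∀ z w, dist z w < δ → g z ≠ 0 → dist (g z) (g w) < e := by
    intro z w hzw hz
    obtain ⟨γ, hγ⟩ := ModularGroup.exists_smul_mem_fd z
    have hdist : dist (γ • z) (γ • w) < δ :=
      (dist_smul (γ : SL(2, ℝ)) z w).trans_lt hzw
    have him : (γ • z).im ≤ Y := not_lt.1 fun h ↦ hz (hg.smul_eq γ z ▸ hY _ h)
    simpa only [Set.mem_ofPred_eq, hg.smul_eq] using hnear hdist ⟨hγ, him⟩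
  refine ⟨δ, hδ, fun {z w} hzw ↦ ?_⟩
  by_cases hz : g z = 0
  · by_cases hw : g w = 0
    · simpa [hz, hw] using he
    · exact dist_comm (g z) (g w) ▸ near_of_ne_zero w z (dist_comm z w ▸ hzw) hw
  · exact near_of_ne_zero z w hzw hz

lemma continuous_comp_ofReIm (hg : IsModularTestFunction g) {y : ℝ} (hy : 0 < y) :
    Continuous fun x ↦ g (ofReIm x y) :=
  hg.continuous.comp (continuous_ofReIm hy)

end IsModularTestFunction

section HyperbolicMeasure

lemma measurableEmbedding_reIm : MeasurableEmbedding fun z : ℍ ↦ (z.re, z.im) :=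
  measurableEquivRealProd.measurableEmbedding.comp measurableEmbedding_coe

lemma map_reIm_volume :
    Measure.map (fun z : ℍ ↦ (z.re, z.im)) volume =
      (volume.restrict {p : ℝ × ℝ | 0 < p.2}).withDensity fun p ↦ ENNReal.ofReal (p.2 ^ 2)⁻¹ := by
  ext s hs
  rw [Measure.map_apply measurableEmbedding_reIm.measurable hs, volume_eq_lintegral,
    withDensity_apply _ hs, Measure.restrict_restrict hs,
    ← volume_preserving_equiv_real_prod.setLIntegral_comp_preimage_emb
      measurableEquivRealProd.measurableEmbedding]
  have himage : UpperHalfPlane.coe '' ((fun z : ℍ ↦ (z.re, z.im)) ⁻¹' s) =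
      measurableEquivRealProd ⁻¹' (s ∩ {p | 0 < p.2}) := by
    ext z
    constructor
    · rintro ⟨w, hw, rfl⟩
      exact ⟨hw, w.im_pos⟩
    · rintro ⟨hz, him⟩
      exact ⟨⟨z, him⟩, hz, rfl⟩
  rw [himage]
  refine lintegral_congr fun z ↦ ?_
  rw [measurableEquivRealProd_apply, ENNReal.ofReal, ENNReal.coe_inj]
  refine NNReal.coe_injective ?_
  simp [Real.coe_toNNReal _ (inv_nonneg.2 (sq_nonneg z.im))]

lemma restrict_map_reIm_volume {s : Set (ℝ × ℝ)} (hs : MeasurableSet s)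
    (hs_pos : s ⊆ {p | 0 < p.2}) :
    (Measure.map (fun z : ℍ ↦ (z.re, z.im)) volume).restrict s =
      (volume.restrict s).withDensity fun p ↦ ENNReal.ofReal (p.2 ^ 2)⁻¹ := by
  rw [map_reIm_volume, restrict_withDensity hs, Measure.restrict_restrict hs,
    Set.inter_eq_left.2 hs_pos]

lemma setIntegral_eq_setIntegral_ofReIm (g : ℍ → ℝ) {s : Set (ℝ × ℝ)}
    (hs : MeasurableSet s) (hs_pos : s ⊆ {p | 0 < p.2}) :
    ∫ z in {z : ℍ | (z.re, z.im) ∈ s}, g z = ∫ p in s, g (ofReIm p.1 p.2) / p.2 ^ 2 := by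
  have hmap := measurableEmbedding_reIm.setIntegral_map (μ := volume)
    (fun p : ℝ × ℝ ↦ g (ofReIm p.1 p.2)) s
  simp only [ofReIm_re_im] at hmap
  refine hmap.symm.trans ?_
  rw [restrict_map_reIm_volume hs hs_pos,
    integral_withDensity_eq_integral_toReal_smul (by fun_prop) (by simp)]
  refine integral_congr_ae (.of_forall fun p ↦ ?_)
  simp only [ENNReal.toReal_ofReal (inv_nonneg.2 (sq_nonneg p.2)), smul_eq_mul, div_eq_inv_mul]

lemma integrableOn_iff_integrableOn_ofReIm (g : ℍ → ℝ) {s : Set (ℝ × ℝ)}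
    (hs : MeasurableSet s) (hs_pos : s ⊆ {p | 0 < p.2}) :
    IntegrableOn g {z : ℍ | (z.re, z.im) ∈ s} ↔
      IntegrableOn (fun p : ℝ × ℝ ↦ g (ofReIm p.1 p.2) / p.2 ^ 2) s := by
  have hmap := measurableEmbedding_reIm.integrableOn_map_iff (μ := volume)
    (f := fun p : ℝ × ℝ ↦ g (ofReIm p.1 p.2)) (s := s)
  simp only [Function.comp_def, ofReIm_re_im] at hmap
  refine hmap.symm.trans ?_
  rw [IntegrableOn, restrict_map_reIm_volume hs hs_pos,
    integrable_withDensity_iff_integrable_smul' (by fun_prop) (by simp), IntegrableOn]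
  refine integrable_congr (.of_forall fun p ↦ ?_)
  simp only [ENNReal.toReal_ofReal (inv_nonneg.2 (sq_nonneg p.2)), smul_eq_mul, div_eq_inv_mul]

end HyperbolicMeasure

section LatticeCounting

open Pointwise in
lemma tendsto_ncard_intCast_mem_smul_div_pow {ι : Type*} [Fintype ι] {s : Set (ι → ℝ)}
    (hs_bdd : Bornology.IsBounded s) (hs_meas : MeasurableSet s) (hs_convex : Convex ℝ s)
    (hs_zero : 0 ∈ s) :
    Tendsto (fun R : ℝ ↦ ({v : ι → ℤ | (fun i ↦ (v i : ℝ)) ∈ R • s}.ncard : ℝ) / R ^ Fintype.card ι)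
      atTop (𝓝 (volume.real s)) := by
  have hmono : ∀ ⦃x y : ℝ⦄, 0 < x → x ≤ y → x • s ⊆ y • s := by
    rintro x y hx hxy _ ⟨p, hp, rfl⟩
    have hy : 0 < y := hx.trans_le hxy
    refine ⟨(x / y) • p, hs_convex.smul_mem_of_zero_mem hs_zero hp
      ⟨by positivity, (div_le_one hy).2 hxy⟩, ?_⟩
    simp only [smul_smul, mul_div_cancel₀ _ hy.ne']
  refine (tendsto_card_div_pow_atTop_volume' s hs_bdd hs_meas
    (hs_convex.addHaar_frontier volume) hmono).congr' ?_
  filter_upwards [eventually_gt_atTop 0] with R hR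
  congr 2
  rw [Nat.card_coe_set_eq]
  symm
  refine Set.ncard_congr (fun v _ ↦ R⁻¹ • fun i ↦ (v i : ℝ)) (fun v hv ↦ ?_) (fun v w _ _ hvw ↦ ?_)
    fun p hp ↦ ?_
  · refine ⟨(Set.mem_smul_set_iff_inv_smul_mem₀ hR.ne' _ _).1 hv, Set.smul_mem_smul_set ?_⟩
    simp [Module.Basis.mem_span_iff_repr_mem]
  · have := smul_right_injective _ (inv_ne_zero hR.ne') hvw
    ext i
    exact_mod_cast congrFun this i
  · obtain ⟨hps, q, hq, rfl⟩ := hp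
    simp only [SetLike.mem_coe, Module.Basis.mem_span_iff_repr_mem, Pi.basisFun_repr] at hq
    choose v hv using hq
    obtain rfl : (fun i ↦ (v i : ℝ)) = q := funext hv
    exact ⟨v, (Set.mem_smul_set_iff_inv_smul_mem₀ hR.ne' _ _).2 hps, rfl⟩

open ArithmeticFunction in
lemma tsum_moebius_div_sq : ∑' n : ℕ, (moebius n : ℝ) / (n : ℝ) ^ 2 = 6 / Real.pi ^ 2 := by
  have hLSeries : LSeries (fun n ↦ ((moebius n : ℤ) : ℂ)) 2 =
      ((∑' n : ℕ, (moebius n : ℝ) / (n : ℝ) ^ 2 : ℝ) : ℂ) := by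
    rw [LSeries, Complex.ofReal_tsum]
    refine tsum_congr fun n ↦ ?_
    rcases eq_or_ne n 0 with rfl | hn
    · simp
    · rw [LSeries.term_of_ne_zero hn]
      push_cast
      norm_cast
  have hinv := LSeries_one_mul_Lseries_moebius (s := 2) (by norm_num)
  rw [LSeries_one_eq_riemannZeta (by norm_num), riemannZeta_two, hLSeries] at hinv
  have hinv' : Real.pi ^ 2 / 6 * ∑' n : ℕ, (moebius n : ℝ) / (n : ℝ) ^ 2 = 1 := by
    exact_mod_cast hinv
  have := Real.pi_pos
  field_simp at hinv' ⊢
  linarith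

open ArithmeticFunction in
lemma card_filter_eq_one_eq_tsum_moebius {ι : Type*} (s : Finset ι) {f : ι → ℕ}
    (hf : ∀ i ∈ s, f i ≠ 0) :
    ((s.filter (f · = 1)).card : ℝ) =
      ∑' n : ℕ, (moebius n : ℝ) * (s.filter (n ∣ f ·)).card := by
  have hterm : ∀ i ∈ s, HasSum (fun n : ℕ ↦ (moebius n : ℝ) * if n ∣ f i then 1 else 0)
      (if f i = 1 then 1 else 0) := by
    intro i hi
    have hmoebius : ∑ n ∈ (f i).divisors, moebius n = if f i = 1 then 1 else 0 := by
      rw [← coe_mul_zeta_apply, moebius_mul_coe_zeta, one_apply]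
    convert hasSum_sum_of_ne_finset_zero (L := .unconditional ℕ) (s := (f i).divisors)
      fun n hn ↦ ?_ using 1
    swap
    · simp_all
    rw [Finset.sum_congr rfl fun n hn ↦ by rw [if_pos (Nat.dvd_of_mem_divisors hn), mul_one]]
    exact_mod_cast hmoebius.symm
  have hsum := (hasSum_sum hterm).tsum_eq
  simp only [← Finset.mul_sum, Finset.sum_boole] at hsum
  exact hsum.symm

/-- The nonzero vectors of `ℤ²` whose image `v₀ z + v₁` in the lattice `ℤz + ℤ` has norm less
than `R`. -/
def latticeBall (z : ℍ) (R : ℝ) : Set (Fin 2 → ℤ) :=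
  {v | v ≠ 0 ∧ ‖(v 0 : ℂ) * z + v 1‖ < R}

/-- The primitive vectors of `ℤ²` whose image `v₀ z + v₁` in the lattice `ℤz + ℤ` has norm less
than `R`. -/
def primitiveBall (z : ℍ) (R : ℝ) : Set (Fin 2 → ℤ) :=
  {v | IsCoprime (v 0) (v 1) ∧ ‖(v 0 : ℂ) * z + v 1‖ < R}

variable (z : ℍ) (R : ℝ)

lemma primitiveBall_subset_latticeBall : primitiveBall z R ⊆ latticeBall z R := by
  rintro v ⟨hv, hR⟩
  refine ⟨?_, hR⟩
  rintro rfl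
  exact not_isCoprime_zero_zero hv

variable {R} in
lemma norm_lt_of_mem_latticeBall {v : Fin 2 → ℤ} (hv : v ∈ latticeBall z R) :
    ‖v‖ < R / EisensteinSeries.r z := by
  rw [lt_div_iff₀' (EisensteinSeries.r_pos z)]
  exact (EisensteinSeries.r_mul_max_le z hv.1).trans_lt hv.2

lemma finite_latticeBall : (latticeBall z R).Finite :=
  (isCompact_closedBall 0 (R / EisensteinSeries.r z)).finite_of_discrete.subset
    fun _ hv ↦ mem_closedBall_zero_iff.2 (norm_lt_of_mem_latticeBall z hv).le

lemma finite_primitiveBall : (primitiveBall z R).Finite :=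
  (finite_latticeBall z R).subset (primitiveBall_subset_latticeBall z R)

lemma ncard_ne_zero_and_norm_lt_le (ρ : ℝ) :
    ({v : Fin 2 → ℤ | v ≠ 0 ∧ ‖v‖ < ρ}.ncard : ℝ) ≤ 9 * ρ ^ 2 := by
  rcases le_or_gt ρ 1 with hρ | hρ
  · have hempty : {v : Fin 2 → ℤ | v ≠ 0 ∧ ‖v‖ < ρ} = ∅ := by
      refine Set.eq_empty_of_forall_notMem fun v ⟨hv, hvρ⟩ ↦ hv (funext fun i ↦ ?_)
      have hvi : |(v i : ℝ)| < 1 := (norm_le_pi_norm v i).trans_lt (hvρ.trans_le hρ)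
      exact Int.abs_lt_one_iff.1 (by exact_mod_cast hvi)
    rw [hempty, Set.ncard_empty, Nat.cast_zero]
    positivity
  · have hsubset : {v : Fin 2 → ℤ | v ≠ 0 ∧ ‖v‖ < ρ} ⊆
        (Fintype.piFinset fun _ : Fin 2 ↦ Finset.Icc (-⌊ρ⌋) ⌊ρ⌋ : Finset (Fin 2 → ℤ)) := by
      rintro v ⟨-, hvρ⟩
      refine Finset.mem_coe.2 (Fintype.mem_piFinset.2 fun i ↦ Finset.mem_Icc.2 (abs_le.1 ?_))
      rw [Int.le_floor, Int.cast_abs]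
      exact ((norm_le_pi_norm v i).trans_lt hvρ).le
    have hcard := Set.ncard_le_ncard hsubset (Finset.finite_toSet _)
    rw [Set.ncard_coe_finset, Fintype.card_piFinset_const, Int.card_Icc] at hcard
    have hside : ((⌊ρ⌋ + 1 - -⌊ρ⌋).toNat : ℝ) = 2 * ⌊ρ⌋ + 1 := by
      have : 0 ≤ ⌊ρ⌋ := Int.floor_nonneg.2 (by linarith)
      exact_mod_cast (by omega : ((⌊ρ⌋ + 1 - -⌊ρ⌋).toNat : ℤ) = 2 * ⌊ρ⌋ + 1)
    calc ({v : Fin 2 → ℤ | v ≠ 0 ∧ ‖v‖ < ρ}.ncard : ℝ)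
        ≤ (2 * ⌊ρ⌋ + 1) ^ 2 := by rw [← hside]; exact_mod_cast hcard
      _ ≤ (3 * ρ) ^ 2 := by
          have : (0 : ℝ) ≤ ⌊ρ⌋ := by exact_mod_cast Int.floor_nonneg.2 (by linarith)
          gcongr
          linarith [Int.floor_le ρ]
      _ = 9 * ρ ^ 2 := by ring

lemma ncard_latticeBall_le :
    ((latticeBall z R).ncard : ℝ) ≤ 9 / EisensteinSeries.r z ^ 2 * R ^ 2 := by
  have hsubset : latticeBall z R ⊆ {v | v ≠ 0 ∧ ‖v‖ < R / EisensteinSeries.r z} :=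
    fun v hv ↦ ⟨hv.1, norm_lt_of_mem_latticeBall z hv⟩
  have hfinite : {v : Fin 2 → ℤ | v ≠ 0 ∧ ‖v‖ < R / EisensteinSeries.r z}.Finite :=
    (isCompact_closedBall 0 (R / EisensteinSeries.r z)).finite_of_discrete.subset
      fun v hv ↦ mem_closedBall_zero_iff.2 hv.2.le
  calc ((latticeBall z R).ncard : ℝ)
      ≤ 9 * (R / EisensteinSeries.r z) ^ 2 :=
        (Nat.cast_le.2 (Set.ncard_le_ncard hsubset hfinite)).trans (ncard_ne_zero_and_norm_lt_le _)
    _ = 9 / EisensteinSeries.r z ^ 2 * R ^ 2 := by ring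

lemma ncard_primitiveBall_le :
    ((primitiveBall z R).ncard : ℝ) ≤ 9 / EisensteinSeries.r z ^ 2 * R ^ 2 :=
  (Nat.cast_le.2 (Set.ncard_le_ncard (primitiveBall_subset_latticeBall z R)
    (finite_latticeBall z R))).trans (ncard_latticeBall_le z R)

/-- The coordinate map `v ↦ v₀ z + v₁` of `ℂ` in the basis `z, 1`, which maps `ℤ²` to the lattice
`ℤz + ℤ`. -/
noncomputable def latticeMap (z : ℍ) : (Fin 2 → ℝ) →ₗ[ℝ] ℂ :=
  (LinearMap.proj 0).smulRight (z : ℂ) + (LinearMap.proj 1).smulRight 1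

lemma latticeMap_apply (v : Fin 2 → ℝ) : latticeMap z v = v 0 * z + v 1 := by
  simp [latticeMap]

lemma ker_latticeMap : LinearMap.ker (latticeMap z) = ⊥ := by
  refine LinearMap.ker_eq_bot'.2 fun v hv ↦ ?_
  rw [latticeMap_apply] at hv
  have him : v 0 = 0 := by simpa [z.im_ne_zero] using congrArg Complex.im hv
  have hre : v 1 = 0 := by simpa [him] using congrArg Complex.re hv
  ext i
  fin_cases i
  exacts [him, hre]

lemma isBounded_latticeMap_preimage_ball :
    Bornology.IsBounded (latticeMap z ⁻¹' Metric.ball 0 1) := by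
  obtain ⟨K, -, hK⟩ := (latticeMap z).exists_antilipschitzWith (ker_latticeMap z)
  exact hK.isBounded_preimage Metric.isBounded_ball

lemma volume_latticeMap_preimage_ball :
    volume.real (latticeMap z ⁻¹' Metric.ball 0 1) = Real.pi / z.im := by
  set A : (Fin 2 → ℝ) →ₗ[ℝ] (Fin 2 → ℝ) := Matrix.toLin' !![z.re, 1; z.im, 0] with hA
  have hdet : LinearMap.det A = -z.im := by
    simp [hA, LinearMap.det_toLin', Matrix.det_fin_two]
  have hcomp : ⇑(latticeMap z) = measurableEquivPi.symm ∘ A := by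
    ext v : 1
    rw [latticeMap_apply, Function.comp_apply, measurableEquivPi_symm_apply]
    apply Complex.ext <;> simp [hA, Matrix.mulVec, dotProduct, Fin.sum_univ_two] <;> ring
  rw [hcomp, Set.preimage_comp, Measure.real, Measure.addHaar_preimage_linearMap _
    (by simpa [hdet] using z.im_ne_zero), hdet,
    volume_preserving_equiv_pi.symm.measure_preimage_equiv, Complex.volume_ball]
  simp [abs_of_pos z.im_pos, z.im_pos.le, div_eq_inv_mul]

open Pointwise in
lemma tendsto_ncard_latticeBall_div_sq :
    Tendsto (fun R : ℝ ↦ ((latticeBall z R).ncard : ℝ) / R ^ 2) atTop (𝓝 (Real.pi / z.im)) := by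
  have hlim := tendsto_ncard_intCast_mem_smul_div_pow (isBounded_latticeMap_preimage_ball z)
    (measurableSet_ball.preimage (latticeMap z).continuous_of_finiteDimensional.measurable)
    ((convex_ball 0 1).linear_preimage (latticeMap z)) (by simp)
  rw [volume_latticeMap_preimage_ball, Fintype.card_fin] at hlim
  have hinv : Tendsto (fun R : ℝ ↦ 1 / R ^ 2) atTop (𝓝 0) := by
    simpa using tendsto_pow_neg_atTop (𝕜 := ℝ) (n := 2) (by norm_num)
  refine (sub_zero (Real.pi / z.im) ▸ hlim.sub hinv).congr' ?_
  filter_upwards [eventually_gt_atTop 0] with R hR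
  have hinsert : {v : Fin 2 → ℤ | (fun i ↦ (v i : ℝ)) ∈ R • (latticeMap z ⁻¹' Metric.ball 0 1)} =
      insert 0 (latticeBall z R) := by
    ext v
    simp only [Set.mem_ofPred_eq, Set.mem_smul_set_iff_inv_smul_mem₀ hR.ne', Set.mem_preimage,
      map_smul, mem_ball_zero_iff, norm_smul, norm_inv, Real.norm_of_nonneg hR.le,
      inv_mul_lt_one₀ hR, latticeMap_apply, Set.mem_insert_iff, latticeBall]
    by_cases hv : v = 0 <;> simp [hv, hR]
  rw [hinsert, Set.ncard_insert_of_notMem (fun h ↦ h.1 rfl) (finite_latticeBall z R)]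
  push_cast
  ring

lemma ncard_latticeBall_div {n : ℕ} (hn : n ≠ 0) :
    (latticeBall z (R / n)).ncard =
      ((finite_latticeBall z R).toFinset.filter fun v ↦ n ∣ Int.gcd (v 0) (v 1)).card := by
  have hn_pos : (0 : ℝ) < n := by positivity
  have hscale : ∀ v : Fin 2 → ℤ, (n : ℤ) • v ∈ latticeBall z R ↔ v ∈ latticeBall z (R / n) := by
    intro v
    have hnorm : ‖(((n : ℤ) • v) 0 : ℂ) * z + ((n : ℤ) • v) 1‖ = n * ‖(v 0 : ℂ) * z + v 1‖ := by
      rw [← Complex.norm_natCast n, ← norm_mul]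
      congr 1
      simp
      ring
    simp only [latticeBall, Set.mem_ofPred_eq, hnorm, lt_div_iff₀' hn_pos, ne_eq, smul_eq_zero,
      Nat.cast_eq_zero, hn, false_or]
  rw [← Set.ncard_coe_finset]
  refine Set.ncard_congr (fun v _ ↦ (n : ℤ) • v) (fun v hv ↦ ?_) (fun v w _ _ h ↦ ?_) fun v hv ↦ ?_
  · simp only [Finset.coe_filter, Set.Finite.mem_toFinset, Set.mem_ofPred_eq]
    exact ⟨(hscale v).2 hv, Int.dvd_gcd_iff.2 ⟨by simp, by simp⟩⟩
  · exact smul_right_injective _ (by exact_mod_cast hn) h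
  · obtain ⟨hvR, hdvd⟩ : v ∈ latticeBall z R ∧ n ∣ Int.gcd (v 0) (v 1) := by simpa using hv
    obtain ⟨⟨a, ha⟩, b, hb⟩ := Int.dvd_gcd_iff.1 hdvd
    have hv_eq : (n : ℤ) • ![a, b] = v := by
      ext i
      fin_cases i <;> simp [ha, hb]
    exact ⟨![a, b], (hscale _).1 (hv_eq ▸ hvR), hv_eq⟩

open ArithmeticFunction in
lemma ncard_primitiveBall_eq_tsum_moebius :
    ((primitiveBall z R).ncard : ℝ) =
      ∑' n : ℕ, (moebius n : ℝ) * (latticeBall z (R / n)).ncard := by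
  set V := (finite_latticeBall z R).toFinset
  have hgcd : ∀ v ∈ V, Int.gcd (v 0) (v 1) ≠ 0 := by
    intro v hv h
    obtain ⟨h0, h1⟩ := Int.gcd_eq_zero_iff.1 h
    refine ((Set.Finite.mem_toFinset _).1 hv).1 (funext fun i ↦ ?_)
    fin_cases i
    exacts [h0, h1]
  have hprimitive : primitiveBall z R = V.filter fun v ↦ Int.gcd (v 0) (v 1) = 1 := by
    ext v
    rw [Finset.coe_filter, Set.mem_ofPred_eq, Set.Finite.mem_toFinset,
      ← Int.isCoprime_iff_gcd_eq_one]
    exact ⟨fun hv ↦ ⟨primitiveBall_subset_latticeBall z R hv, hv.1⟩, fun hv ↦ ⟨hv.2, hv.1.2⟩⟩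
  rw [hprimitive, Set.ncard_coe_finset, card_filter_eq_one_eq_tsum_moebius V hgcd]
  refine tsum_congr fun n ↦ ?_
  rcases eq_or_ne n 0 with rfl | hn
  · simp
  · rw [ncard_latticeBall_div z R hn]

open ArithmeticFunction in
lemma tendsto_ncard_primitiveBall_div_sq :
    Tendsto (fun R : ℝ ↦ ((primitiveBall z R).ncard : ℝ) / R ^ 2) atTop
      (𝓝 (6 / (Real.pi * z.im))) := by
  have hlim : 6 / (Real.pi * z.im) =
      ∑' n : ℕ, (moebius n : ℝ) / (n : ℝ) ^ 2 * (Real.pi / z.im) := by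
    rw [tsum_mul_right, tsum_moebius_div_sq]
    field_simp
  simp_rw [hlim, ncard_primitiveBall_eq_tsum_moebius, ← tsum_div_const]
  refine tendsto_tsum_of_dominated_convergence
    (bound := fun n : ℕ ↦ 9 / EisensteinSeries.r z ^ 2 * (1 / (n : ℝ) ^ 2))
    ((Real.summable_one_div_nat_pow.2 (by norm_num)).mul_left _) (fun n ↦ ?_) ?_
  · rcases eq_or_ne n 0 with rfl | hn
    · simp
    refine (((tendsto_ncard_latticeBall_div_sq z).comp (tendsto_id.atTop_div_const
      (by positivity : (0 : ℝ) < n))).const_mul ((moebius n : ℝ) / (n : ℝ) ^ 2)).congr' ?_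
    filter_upwards [eventually_gt_atTop 0] with R hR
    simp only [Function.comp, id]
    field_simp
  · filter_upwards [eventually_gt_atTop 0] with R hR n
    have hmoebius : |(moebius n : ℝ)| ≤ 1 := by exact_mod_cast abs_moebius_le_one
    rw [Real.norm_eq_abs, abs_div, abs_mul, Nat.abs_cast, abs_of_nonneg (sq_nonneg R),
      div_le_iff₀ (by positivity)]
    calc |(moebius n : ℝ)| * (latticeBall z (R / n)).ncard
        ≤ 1 * (9 / EisensteinSeries.r z ^ 2 * (R / n) ^ 2) := by
          gcongr
          exact ncard_latticeBall_le z _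
      _ = 9 / EisensteinSeries.r z ^ 2 * (1 / (n : ℝ) ^ 2) * R ^ 2 := by ring

end LatticeCounting

section Unfolding

instance : Countable SL(2, ℤ) :=
  have : Countable (Matrix (Fin 2) (Fin 2) ℤ) := inferInstanceAs (Countable (Fin 2 → Fin 2 → ℤ))
  Subtype.countable

lemma measurePreserving_smul_SL2Z (γ : SL(2, ℤ)) :
    MeasurePreserving (fun z : ℍ ↦ γ • z) volume volume :=
  measurePreserving_smul ((γ : SL(2, ℝ)) : GL (Fin 2) ℝ) volume

lemma volume_setOf_re_eq (a : ℝ) : volume {z : ℂ | z.re = a} = 0 := by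
  have hpreimage : {z : ℂ | z.re = a} = measurableEquivRealProd ⁻¹' ({a} ×ˢ Set.univ) := by
    ext z
    simp [measurableEquivRealProd_apply]
  rw [hpreimage, volume_preserving_equiv_real_prod.measure_preimage_equiv, Measure.volume_eq_prod,
    Measure.prod_prod, Real.volume_singleton, zero_mul]

lemma volume_fd_diff_fdo : volume (ModularGroup.fd \ ModularGroup.fdo) = 0 := by
  have hsubset : UpperHalfPlane.coe '' (ModularGroup.fd \ ModularGroup.fdo) ⊆
      {z : ℂ | z.re = 1 / 2} ∪ {z : ℂ | z.re = -(1 / 2)} ∪ Metric.sphere 0 1 := by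
    rintro _ ⟨z, ⟨⟨hnorm, hre⟩, hz⟩, rfl⟩
    rcases hre.eq_or_lt with hre | hre
    · exact .inl ((abs_eq (by norm_num)).1 hre)
    · refine .inr (mem_sphere_zero_iff_norm.2 (not_not.1 fun hne ↦ hz ⟨?_, hre⟩))
      rw [normSq_eq_norm_sq] at hnorm ⊢
      exact lt_of_le_of_ne hnorm fun h ↦ hne ((pow_eq_one_iff_of_nonneg (norm_nonneg _)
        two_ne_zero).1 h.symm)
  rw [volume_eq_lintegral]
  refine setLIntegral_measure_zero _ _ (measure_mono_null hsubset ?_)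
  simp only [measure_union_null_iff]
  exact ⟨⟨volume_setOf_re_eq _, volume_setOf_re_eq _⟩, Measure.addHaar_sphere _ _ _⟩

lemma ae_forall_smul_mem_fd_imp_mem_fdo :
    ∀ᵐ z : ℍ, ∀ γ : SL(2, ℤ), γ • z ∈ ModularGroup.fd → γ • z ∈ ModularGroup.fdo := by
  refine ae_all_iff.2 fun γ ↦ ?_
  have hnull : volume ((γ • · : ℍ → ℍ) ⁻¹' (ModularGroup.fd \ ModularGroup.fdo)) = 0 :=
    (measurePreserving_smul_SL2Z γ).quasiMeasurePreserving.preimage_null volume_fd_diff_fdo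
  filter_upwards [measure_eq_zero_iff_ae_notMem.1 hnull] with z hz hfd
  exact not_not.1 fun hfdo ↦ hz ⟨hfd, hfdo⟩

lemma neg_one_ne_one_SL2Z : (-1 : SL(2, ℤ)) ≠ 1 := fun h ↦ by
  have := congrArg (fun γ : SL(2, ℤ) ↦ γ 0 0) h
  simp at this

lemma encard_smul_mem_fdo {z : ℍ} {γ : SL(2, ℤ)} (hγ : γ • z ∈ ModularGroup.fdo) :
    {β : SL(2, ℤ) | β • z ∈ ModularGroup.fdo}.encard = 2 := by
  have hset : {β : SL(2, ℤ) | β • z ∈ ModularGroup.fdo} = {γ, -γ} := by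
    ext β
    constructor
    · intro hβ
      have hquot : (β * γ⁻¹) • γ • z ∈ ModularGroup.fdo := by
        rwa [smul_smul, inv_mul_cancel_right]
      rcases ModularGroup.eq_one_or_neg_one_of_mem_fdo_mem_fdo hγ hquot with h | h
      · exact .inl (mul_inv_eq_one.1 h)
      · exact .inr (by simpa using mul_inv_eq_iff_eq_mul.1 h)
    · rintro (rfl | rfl)
      · exact hγ
      · rwa [Set.mem_ofPred_eq, ModularGroup.SL_neg_smul]
  rw [hset, Set.encard_pair]
  intro h
  apply neg_one_ne_one_SL2Z
  apply mul_right_cancel (b := γ)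
  simpa using h.symm

lemma tsum_indicator_const_eq_encard {α : Type*} (s : Set α) (c : ENNReal) :
    ∑' i, s.indicator (fun _ ↦ c) i = s.encard * c := by
  rw [← tsum_subtype s (fun _ ↦ c), ENNReal.tsum_const, ENat.card_coe_set_eq]

lemma two_mul_lintegral_eq_lintegral_fdo {φ : ℍ → ENNReal} (hφ : Measurable φ) :
    2 * ∫⁻ z, φ z = ∫⁻ w in ModularGroup.fdo, ∑' γ : SL(2, ℤ), φ (γ • w) := by
  have hfdo : MeasurableSet ModularGroup.fdo := ModularGroup.isOpen_fdo.measurableSet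
  have hsmul (γ : SL(2, ℤ)) : Measurable fun z : ℍ ↦ γ • z :=
    (measurePreserving_smul_SL2Z γ).measurable
  have hmove (γ : SL(2, ℤ)) : ∫⁻ w in ModularGroup.fdo, φ (γ⁻¹ • w) =
      ∫⁻ z, {β : SL(2, ℤ) | β • z ∈ ModularGroup.fdo}.indicator (fun _ ↦ φ z) γ := by
    rw [← lintegral_indicator hfdo, ← (measurePreserving_smul_SL2Z γ).lintegral_comp
      (f := ModularGroup.fdo.indicator fun w ↦ φ (γ⁻¹ • w)) ((hφ.comp (hsmul _)).indicator hfdo)]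
    refine lintegral_congr fun z ↦ ?_
    simp only [Set.indicator, Set.mem_ofPred_eq, inv_smul_smul]
  have hmeas (γ : SL(2, ℤ)) :
      Measurable fun z ↦ {β : SL(2, ℤ) | β • z ∈ ModularGroup.fdo}.indicator (fun _ ↦ φ z) γ :=
    hφ.indicator (hsmul γ hfdo)
  calc 2 * ∫⁻ z, φ z = ∫⁻ z, 2 * φ z := (lintegral_const_mul 2 hφ).symm
    _ = ∫⁻ z, ∑' γ : SL(2, ℤ),
          {β : SL(2, ℤ) | β • z ∈ ModularGroup.fdo}.indicator (fun _ ↦ φ z) γ := by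
      refine lintegral_congr_ae ?_
      filter_upwards [ae_forall_smul_mem_fd_imp_mem_fdo] with z hz
      obtain ⟨γ, hγ⟩ := ModularGroup.exists_smul_mem_fd z
      rw [tsum_indicator_const_eq_encard, encard_smul_mem_fdo (hz γ hγ)]
      rfl
    _ = ∑' γ : SL(2, ℤ), ∫⁻ w in ModularGroup.fdo, φ (γ⁻¹ • w) := by
      simp only [hmove, lintegral_tsum fun γ ↦ (hmeas γ).aemeasurable]
    _ = ∑' γ : SL(2, ℤ), ∫⁻ w in ModularGroup.fdo, φ (γ • w) :=
      (Equiv.inv SL(2, ℤ)).tsum_eq fun γ ↦ ∫⁻ w in ModularGroup.fdo, φ (γ • w)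
    _ = ∫⁻ w in ModularGroup.fdo, ∑' γ : SL(2, ℤ), φ (γ • w) :=
      (lintegral_tsum fun γ ↦ (hφ.comp (hsmul γ)).aemeasurable).symm

/-- The part of the fundamental domain `[0, 1) × (0, ∞)` of the translations `T ^ n` lying above
height `ε`; its intersection with an `SL(2, ℤ)`-orbit is parametrized by bottom rows. -/
def cuspStrip (ε : ℝ) : Set ℍ := {z | (z.re, z.im) ∈ Set.Ico (0 : ℝ) 1 ×ˢ Set.Ioi ε}

lemma exists_eq_T_zpow_mul {γ β : SL(2, ℤ)} (hrow : γ 1 = β 1) :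
    ∃ n : ℤ, γ = ModularGroup.T ^ n * β := by
  have h10 : γ 1 0 = β 1 0 := congrFun hrow 0
  have h11 : γ 1 1 = β 1 1 := congrFun hrow 1
  have hγ := γ.det_coe
  have hβ := β.det_coe
  rw [Matrix.det_fin_two] at hγ hβ
  refine ⟨(γ * β⁻¹) 0 1, mul_inv_eq_iff_eq_mul.1 ?_⟩
  ext i j
  rw [ModularGroup.coe_T_zpow]
  fin_cases i <;> fin_cases j <;>
    simp [Matrix.SpecialLinearGroup.coe_inv, Matrix.adjugate_fin_two, Matrix.mul_apply,
      Fin.sum_univ_two, h10, h11] <;> grind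

lemma lt_im_smul_iff_mem_primitiveBall (γ : SL(2, ℤ)) (w : ℍ) {ε : ℝ} (hε : 0 < ε) :
    ε < (γ • w).im ↔ γ 1 ∈ primitiveBall w √(w.im / ε) := by
  have hdenom : 0 < ‖(γ 1 0 : ℂ) * w + γ 1 1‖ := by
    rw [norm_pos_iff, ← ModularGroup.denom_apply]
    exact denom_ne_zero _ w
  have hcoprime : IsCoprime (γ 1 0) (γ 1 1) := ModularGroup.bottom_row_coprime γ
  simp only [primitiveBall, Set.mem_ofPred_eq, hcoprime, true_and]
  rw [ModularGroup.im_smul_eq_div_normSq, Complex.normSq_eq_norm_sq, ModularGroup.denom_apply,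
    Real.lt_sqrt hdenom.le, lt_div_iff₀ (by positivity), lt_div_iff₀' hε]

lemma encard_smul_mem_cuspStrip (w : ℍ) {ε : ℝ} (hε : 0 < ε) :
    {γ : SL(2, ℤ) | γ • w ∈ cuspStrip ε}.encard = (primitiveBall w √(w.im / ε)).encard := by
  refine Set.encard_congr (Set.BijOn.equiv (fun γ ↦ γ 1) ⟨fun γ hγ ↦ ?_, fun γ hγ β hβ hrow ↦ ?_,
    fun v hv ↦ ?_⟩)
  · exact (lt_im_smul_iff_mem_primitiveBall γ w hε).1 hγ.2
  · obtain ⟨n, rfl⟩ := exists_eq_T_zpow_mul hrow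
    obtain ⟨⟨hβ_nonneg, hβ_lt⟩, -⟩ := hβ
    obtain ⟨⟨hγ_nonneg, hγ_lt⟩, -⟩ := hγ
    rw [mul_smul, ModularGroup.re_T_zpow_smul] at hγ_nonneg hγ_lt
    have hn : n = 0 := by
      have hn_lt : (n : ℝ) < 1 := by linarith
      have hn_gt : (-1 : ℝ) < n := by linarith
      norm_cast at hn_lt hn_gt
      omega
    simp [hn]
  · obtain ⟨γ, -, rfl⟩ := ModularGroup.bottom_row_surj (R := ℤ) hv.1
    have hrow := ModularGroup.T_pow_mul_apply_one (-⌊(γ • w).re⌋) γ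
    refine ⟨ModularGroup.T ^ (-⌊(γ • w).re⌋) * γ, ⟨?_, ?_⟩, hrow⟩
    · rw [mul_smul, ModularGroup.re_T_zpow_smul]
      push_cast
      exact ⟨by linarith [Int.floor_le (γ • w).re], by linarith [Int.lt_floor_add_one (γ • w).re]⟩
    · exact (lt_im_smul_iff_mem_primitiveBall _ w hε).2 (hrow ▸ hv)

lemma tsum_indicator_cuspStrip_smul {φ : ℍ → ENNReal} (hφ : ∀ (γ : SL(2, ℤ)) z, φ (γ • z) = φ z)
    {ε : ℝ} (hε : 0 < ε) (w : ℍ) :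
    ∑' γ : SL(2, ℤ), (cuspStrip ε).indicator φ (γ • w) =
      (primitiveBall w √(w.im / ε)).ncard * φ w := by
  have hind (γ : SL(2, ℤ)) : (cuspStrip ε).indicator φ (γ • w) =
      {β : SL(2, ℤ) | β • w ∈ cuspStrip ε}.indicator (fun _ ↦ φ w) γ := by
    simp only [Set.indicator, Set.mem_ofPred_eq, hφ]
  simp only [hind]
  rw [tsum_indicator_const_eq_encard, encard_smul_mem_cuspStrip w hε,
    ← (finite_primitiveBall w _).cast_ncard_eq]
  rfl

lemma measurableSet_cuspStrip (ε : ℝ) : MeasurableSet (cuspStrip ε) :=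
  measurableEmbedding_reIm.measurable (measurableSet_Ico.prod measurableSet_Ioi)

lemma two_mul_setLIntegral_cuspStrip {φ : ℍ → ENNReal} (hφ_meas : Measurable φ)
    (hφ : ∀ (γ : SL(2, ℤ)) z, φ (γ • z) = φ z) {ε : ℝ} (hε : 0 < ε) :
    2 * ∫⁻ z in cuspStrip ε, φ z =
      ∫⁻ w in ModularGroup.fdo, (primitiveBall w √(w.im / ε)).ncard * φ w := by
  rw [← lintegral_indicator (measurableSet_cuspStrip ε),
    two_mul_lintegral_eq_lintegral_fdo (hφ_meas.indicator (measurableSet_cuspStrip ε))]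
  simp only [tsum_indicator_cuspStrip_smul hφ hε]

lemma measurable_ncard_primitiveBall {ε : ℝ} (hε : 0 < ε) :
    Measurable fun w : ℍ ↦ ((primitiveBall w √(w.im / ε)).ncard : ℝ) := by
  have hsum : (fun w : ℍ ↦ ((primitiveBall w √(w.im / ε)).ncard : ℝ)) =
      fun w ↦ (∑' γ : SL(2, ℤ),
        (cuspStrip ε).indicator (fun _ ↦ (1 : ENNReal)) (γ • w)).toReal := by
    ext w
    rw [tsum_indicator_cuspStrip_smul (fun _ _ ↦ rfl) hε w]
    simp
  rw [hsum]
  exact (Measurable.tsum fun γ ↦ (measurable_const.indicator (measurableSet_cuspStrip ε)).comp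
    (measurePreserving_smul_SL2Z γ).measurable).ennreal_toReal

end Unfolding

section ClosedHorocycles

lemma exists_mul_ncard_primitiveBall_le :
    ∃ K : ℝ, ∀ w ∈ ModularGroup.fdo, ∀ ε > 0,
      ε * (primitiveBall w √(w.im / ε)).ncard ≤ K * w.im := by
  let r₀ := EisensteinSeries.r ⟨⟨1 / 2, 1 / 2⟩, one_half_pos⟩
  have hr₀ : 0 < r₀ := EisensteinSeries.r_pos _
  refine ⟨9 / r₀ ^ 2, fun w hw ε hε ↦ ?_⟩
  have him := ModularGroup.three_lt_four_mul_im_sq_of_mem_fdo hw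
  have hr : r₀ ≤ EisensteinSeries.r w :=
    EisensteinSeries.r_lower_bound_on_verticalStrip w one_half_pos
      ⟨hw.2.le, by nlinarith [w.im_pos]⟩
  calc ε * (primitiveBall w √(w.im / ε)).ncard
      ≤ ε * (9 / EisensteinSeries.r w ^ 2 * √(w.im / ε) ^ 2) := by
        gcongr
        exact ncard_primitiveBall_le w _
    _ ≤ ε * (9 / r₀ ^ 2 * √(w.im / ε) ^ 2) := by gcongr
    _ = 9 / r₀ ^ 2 * w.im := by
        rw [Real.sq_sqrt (div_pos w.im_pos hε).le]
        field_simp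

lemma tendsto_mul_ncard_primitiveBall (w : ℍ) :
    Tendsto (fun ε : ℝ ↦ ε * (primitiveBall w √(w.im / ε)).ncard) (𝓝[>] 0)
      (𝓝 (6 / Real.pi)) := by
  have hsqrt : Tendsto (fun ε : ℝ ↦ √(w.im / ε)) (𝓝[>] 0) atTop :=
    Real.tendsto_sqrt_atTop.comp (tendsto_inv_nhdsGT_zero.const_mul_atTop w.im_pos)
  have hlim := ((tendsto_ncard_primitiveBall_div_sq w).comp hsqrt).const_mul w.im
  have hvalue : w.im * (6 / (Real.pi * w.im)) = 6 / Real.pi := by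
    have := w.im_pos
    field_simp
  rw [hvalue] at hlim
  refine hlim.congr' ?_
  filter_upwards [self_mem_nhdsWithin] with ε (hε : 0 < ε)
  have := w.im_pos
  rw [Function.comp_apply, Real.sq_sqrt (div_pos w.im_pos hε).le]
  field_simp

namespace IsModularTestFunction

variable {g : ℍ → ℝ} {ε : ℝ}

lemma integrableOn_im_mul (hg : IsModularTestFunction g) :
    IntegrableOn (fun w ↦ w.im * g w) ModularGroup.fdo := by
  obtain ⟨Y, hY⟩ := hg.exists_im_bound
  have hcont : Continuous fun w : ℍ ↦ w.im * g w := UpperHalfPlane.continuous_im.mul hg.continuous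
  have hcompact := ModularGroup.isCompact_truncatedFundamentalDomain Y
  refine (hcont.continuousOn.integrableOn_compact hcompact).of_forall_sdiff_eq_zero
    ModularGroup.isOpen_fdo.measurableSet fun w hw ↦ ?_
  rw [hY w (not_le.1 fun h ↦ hw.2 ⟨ModularGroup.fdo_subset_fd hw.1, h⟩), mul_zero]

lemma integrableOn_ncard_mul (hg : IsModularTestFunction g) (hε : 0 < ε) :
    IntegrableOn (fun w ↦ (primitiveBall w √(w.im / ε)).ncard * g w) ModularGroup.fdo := by
  obtain ⟨K, hK⟩ := exists_mul_ncard_primitiveBall_le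
  refine (hg.integrableOn_im_mul.const_mul (K / ε)).mono
    ((measurable_ncard_primitiveBall hε).mul hg.continuous.measurable).aestronglyMeasurable ?_
  refine ae_restrict_of_forall_mem ModularGroup.isOpen_fdo.measurableSet fun w hw ↦ ?_
  have hle : ((primitiveBall w √(w.im / ε)).ncard : ℝ) ≤ K / ε * w.im := by
    rw [div_mul_eq_mul_div, le_div_iff₀' hε]
    exact hK w hw ε hε
  rw [← mul_assoc, norm_mul, norm_mul (K / ε * w.im), Real.norm_natCast]
  gcongr
  exact hle.trans (le_abs_self _)

lemma two_mul_setLIntegral_cuspStrip_ofReal (hg : IsModularTestFunction g) (hε : 0 < ε) :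
    2 * ∫⁻ z in cuspStrip ε, ENNReal.ofReal (g z) =
      ∫⁻ w in ModularGroup.fdo, ENNReal.ofReal ((primitiveBall w √(w.im / ε)).ncard * g w) := by
  simp only [ENNReal.ofReal_mul (Nat.cast_nonneg _), ENNReal.ofReal_natCast]
  exact two_mul_setLIntegral_cuspStrip hg.continuous.measurable.ennreal_ofReal
    (fun γ z ↦ by rw [hg.smul_eq]) hε

lemma neg (hg : IsModularTestFunction g) : IsModularTestFunction (-g) where
  continuous := hg.continuous.neg
  smul_eq γ z := congrArg Neg.neg (hg.smul_eq γ z)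
  exists_im_bound := hg.exists_im_bound.imp fun _ hY z hz ↦ neg_eq_zero.2 (hY z hz)

lemma integrableOn_cuspStrip (hg : IsModularTestFunction g) (hε : 0 < ε) :
    IntegrableOn g (cuspStrip ε) := by
  refine ⟨hg.continuous.aestronglyMeasurable, (hasFiniteIntegral_iff_norm _).2 ?_⟩
  have hfinite := (hasFiniteIntegral_iff_norm _).1 (hg.integrableOn_ncard_mul hε).2
  simp only [norm_mul, Real.norm_natCast, ENNReal.ofReal_mul (Nat.cast_nonneg _),
    ENNReal.ofReal_natCast] at hfinite
  rw [← two_mul_setLIntegral_cuspStrip hg.continuous.measurable.norm.ennreal_ofReal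
    (fun γ z ↦ by rw [hg.smul_eq]) hε] at hfinite
  exact ENNReal.lt_top_of_mul_ne_top_right hfinite.ne two_ne_zero

lemma two_mul_setIntegral_cuspStrip (hg : IsModularTestFunction g) (hε : 0 < ε) :
    2 * ∫ z in cuspStrip ε, g z =
      ∫ w in ModularGroup.fdo, (primitiveBall w √(w.im / ε)).ncard * g w := by
  have hpos := congrArg ENNReal.toReal (hg.two_mul_setLIntegral_cuspStrip_ofReal hε)
  have hneg := congrArg ENNReal.toReal (hg.neg.two_mul_setLIntegral_cuspStrip_ofReal hε)
  simp only [ENNReal.toReal_mul, ENNReal.toReal_ofNat, Pi.neg_apply, mul_neg] at hpos hneg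
  rw [integral_eq_lintegral_pos_part_sub_lintegral_neg_part (hg.integrableOn_cuspStrip hε),
    integral_eq_lintegral_pos_part_sub_lintegral_neg_part (hg.integrableOn_ncard_mul hε),
    ← hpos, ← hneg, mul_sub]

lemma tendsto_mul_setIntegral_cuspStrip (hg : IsModularTestFunction g) :
    Tendsto (fun ε ↦ ε * ∫ z in cuspStrip ε, g z) (𝓝[>] 0)
      (𝓝 (3 / Real.pi * ∫ w in ModularGroup.fdo, g w)) := by
  obtain ⟨K, hK⟩ := exists_mul_ncard_primitiveBall_le
  have hlim : Tendsto
      (fun ε : ℝ ↦ ∫ w in ModularGroup.fdo, ε * (primitiveBall w √(w.im / ε)).ncard * g w)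
      (𝓝[>] 0) (𝓝 (∫ w in ModularGroup.fdo, 6 / Real.pi * g w)) := by
    refine tendsto_integral_filter_of_dominated_convergence (fun w ↦ K * ‖w.im * g w‖) ?_ ?_
      (hg.integrableOn_im_mul.norm.const_mul K)
      (.of_forall fun w ↦ (tendsto_mul_ncard_primitiveBall w).mul_const _)
    · filter_upwards [self_mem_nhdsWithin] with ε hε
      exact (((measurable_ncard_primitiveBall hε).const_mul ε).mul
        hg.continuous.measurable).aestronglyMeasurable
    · filter_upwards [self_mem_nhdsWithin] with ε (hε : 0 < ε)
      refine ae_restrict_of_forall_mem ModularGroup.isOpen_fdo.measurableSet fun w hw ↦ ?_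
      rw [norm_mul, norm_mul w.im, ← mul_assoc, Real.norm_of_nonneg w.im_pos.le,
        Real.norm_of_nonneg (by positivity)]
      exact mul_le_mul_of_nonneg_right (hK w hw ε hε) (norm_nonneg _)
  rw [integral_const_mul] at hlim
  convert (hlim.const_mul (1 / 2)).congr' ?_ using 2
  · ring
  · filter_upwards [self_mem_nhdsWithin] with ε hε
    simp only [mul_assoc]
    rw [integral_const_mul, ← hg.two_mul_setIntegral_cuspStrip hε]
    ring

lemma integrableOn_ofReIm_div_sq (hg : IsModularTestFunction g) (hε : 0 < ε) :
    IntegrableOn (fun p : ℝ × ℝ ↦ g (ofReIm p.1 p.2) / p.2 ^ 2)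
      (Set.Ico 0 1 ×ˢ Set.Ioi ε) :=
  (integrableOn_iff_integrableOn_ofReIm g (measurableSet_Ico.prod measurableSet_Ioi)
    fun _ hp ↦ hε.trans hp.2).1 (hg.integrableOn_cuspStrip hε)

lemma integrableOn_horocycleIntegral_div_sq (hg : IsModularTestFunction g) (hε : 0 < ε) :
    IntegrableOn (fun y ↦ (∫ x in (0)..1, g (ofReIm x y)) / y ^ 2) (Set.Ioi ε) := by
  have hint := hg.integrableOn_ofReIm_div_sq hε
  rw [IntegrableOn, Measure.volume_eq_prod, ← Measure.prod_restrict] at hint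
  refine hint.integral_prod_right.congr (.of_forall fun y ↦ ?_)
  simp only [integral_div]
  rw [intervalIntegral.integral_of_le zero_le_one, integral_Ico_eq_integral_Ioc]

lemma setIntegral_cuspStrip_eq (hg : IsModularTestFunction g) (hε : 0 < ε) :
    ∫ z in cuspStrip ε, g z =
      ∫ y in Set.Ioi ε, (∫ x in (0)..1, g (ofReIm x y)) / y ^ 2 := by
  have hint := hg.integrableOn_ofReIm_div_sq hε
  rw [IntegrableOn, Measure.volume_eq_prod, ← Measure.prod_restrict] at hint
  rw [cuspStrip, setIntegral_eq_setIntegral_ofReIm g (measurableSet_Ico.prod measurableSet_Ioi)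
    fun _ hp ↦ hε.trans hp.2, Measure.volume_eq_prod, ← Measure.prod_restrict,
    integral_prod_symm _ hint]
  refine integral_congr_ae (.of_forall fun y ↦ ?_)
  simp only [integral_div]
  rw [intervalIntegral.integral_of_le zero_le_one, integral_Ico_eq_integral_Ioc]

end IsModularTestFunction
lemma integral_one_div_sq {a b : ℝ} (ha : 0 < a) (hb : 0 < b) :
    ∫ y in a..b, 1 / y ^ 2 = 1 / a - 1 / b := by
  have hzpow := integral_zpow (n := -2) (.inr ⟨by norm_num, Set.notMem_uIcc_of_lt ha hb⟩)
  norm_num [zpow_neg, div_neg] at hzpow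
  simpa using hzpow

lemma abs_mul_integral_div_sq_sub_le {A : ℝ → ℝ} {a e ε T : ℝ} (hε : 0 < ε) (hT : 1 < T)
    (hint : IntervalIntegrable (fun y ↦ A y / y ^ 2) volume ε (T * ε))
    (hA : ∀ y ∈ Set.Icc ε (T * ε), |A y - a| ≤ e) :
    |ε * (∫ y in ε..T * ε, A y / y ^ 2) - (1 - 1 / T) * a| ≤ e * (1 - 1 / T) := by
  have hT_pos : 0 < T := one_pos.trans hT
  have hle : ε ≤ T * ε := le_mul_of_one_le_left hε.le hT.le
  have hweight : ∫ y in ε..T * ε, 1 / y ^ 2 = (1 - 1 / T) / ε := by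
    rw [integral_one_div_sq hε (mul_pos hT_pos hε)]
    field_simp
  have hweight_int : IntervalIntegrable (fun y : ℝ ↦ 1 / y ^ 2) volume ε (T * ε) := by
    refine ContinuousOn.intervalIntegrable_of_Icc hle fun y hy ↦ ContinuousAt.continuousWithinAt ?_
    have : y ≠ 0 := (hε.trans_le hy.1).ne'
    fun_prop (disch := positivity)
  have hdiff : (∫ y in ε..T * ε, A y / y ^ 2) - a * ((1 - 1 / T) / ε) =
      ∫ y in ε..T * ε, (A y - a) * (1 / y ^ 2) := by
    rw [← hweight, ← intervalIntegral.integral_const_mul,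
      ← intervalIntegral.integral_sub hint (hweight_int.const_mul a)]
    simp only [mul_one_div, sub_div]
  have hbound : |∫ y in ε..T * ε, (A y - a) * (1 / y ^ 2)| ≤ e * ((1 - 1 / T) / ε) := by
    rw [← hweight, ← intervalIntegral.integral_const_mul]
    refine intervalIntegral.norm_integral_le_of_norm_le (f := fun y ↦ (A y - a) * (1 / y ^ 2)) hle
      (.of_forall fun y hy ↦ ?_) (hweight_int.const_mul e)
    rw [norm_mul, Real.norm_of_nonneg (by positivity : (0 : ℝ) ≤ 1 / y ^ 2)]
    gcongr
    exact hA y ⟨hy.1.le, hy.2⟩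
  calc |ε * (∫ y in ε..T * ε, A y / y ^ 2) - (1 - 1 / T) * a|
      = ε * |(∫ y in ε..T * ε, A y / y ^ 2) - a * ((1 - 1 / T) / ε)| := by
        rw [← abs_of_pos hε, ← abs_mul, abs_of_pos hε]
        congr 1
        field_simp
    _ ≤ ε * (e * ((1 - 1 / T) / ε)) := by
        rw [hdiff]
        gcongr
    _ = e * (1 - 1 / T) := by field_simp

lemma tendsto_of_tendsto_mul_integral_div_sq {A : ℝ → ℝ} {C : ℝ}
    (hint : ∀ ε > 0, IntegrableOn (fun y ↦ A y / y ^ 2) (Set.Ioi ε))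
    (hlim : Tendsto (fun ε ↦ ε * ∫ y in Set.Ioi ε, A y / y ^ 2) (𝓝[>] 0) (𝓝 C))
    (hslow : ∀ e > 0, ∃ T > 1, ∀ ε > 0, ∀ y ∈ Set.Icc ε (T * ε), |A y - A ε| ≤ e) :
    Tendsto A (𝓝[>] 0) (𝓝 C) := by
  refine Metric.tendsto_nhds.2 fun e he ↦ ?_
  obtain ⟨T, hT, hA⟩ := hslow (e / 2) (half_pos he)
  have hT_pos : 0 < T := one_pos.trans hT
  have hθ : 0 < 1 - 1 / T := sub_pos.2 (by rwa [div_lt_one hT_pos])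
  have hscale : Tendsto (T * ·) (𝓝[>] 0) (𝓝[>] (0 : ℝ)) := by
    refine tendsto_nhdsWithin_iff.2 ⟨?_, ?_⟩
    · simpa using ((continuous_const_mul T).tendsto 0).mono_left nhdsWithin_le_nhds
    · filter_upwards [self_mem_nhdsWithin] with ε hε using mul_pos hT_pos hε
  have hblock : Tendsto (fun ε ↦ ε * ∫ y in ε..T * ε, A y / y ^ 2) (𝓝[>] 0)
      (𝓝 ((1 - 1 / T) * C)) := by
    convert (hlim.sub ((hlim.comp hscale).const_mul (1 / T))).congr' ?_ using 2
    · ring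
    · filter_upwards [self_mem_nhdsWithin] with ε (hε : 0 < ε)
      have hTε : 0 < T * ε := by positivity
      rw [← intervalIntegral.integral_Ioi_sub_Ioi' (hint ε hε) (hint _ hTε), Function.comp_apply]
      field_simp
  filter_upwards [self_mem_nhdsWithin, Metric.tendsto_nhds.1 hblock _ (mul_pos hθ (half_pos he))]
    with ε (hε : 0 < ε) hnear
  have hle : ε ≤ T * ε := le_mul_of_one_le_left hε.le hT.le
  have happrox := abs_mul_integral_div_sq_sub_le hε hT
    ((intervalIntegrable_iff_integrableOn_Ioc_of_le hle).2
      ((hint ε hε).mono_set Set.Ioc_subset_Ioi_self)) (hA ε hε)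
  rw [Real.dist_eq] at hnear ⊢
  rw [abs_le] at happrox
  rw [abs_lt] at hnear ⊢
  constructor <;> nlinarith

lemma fdo_eq_setOf_mem_fundDom : ModularGroup.fdo = {z : ℍ | (z.re, z.im) ∈ fundDom} := by
  ext z
  simp only [ModularGroup.fdo, fundDom, normSq_apply, Set.mem_ofPred_eq, coe_re, coe_im, ← sq,
    z.im_pos, and_true]
  exact and_comm

lemma measurableSet_fundDom : MeasurableSet fundDom := by
  unfold fundDom
  measurability

lemma setIntegral_fdo_eq_setIntegral_fundDom (g : ℍ → ℝ) :
    ∫ w in ModularGroup.fdo, g w = ∫ p in fundDom, g (ofReIm p.1 p.2) / p.2 ^ 2 := by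
  rw [fdo_eq_setOf_mem_fundDom,
    setIntegral_eq_setIntegral_ofReIm g measurableSet_fundDom fun _ hp ↦ hp.2.2]

namespace IsModularTestFunction

variable {g : ℍ → ℝ}

lemma exists_abs_horocycleIntegral_sub_le (hg : IsModularTestFunction g) {e : ℝ} (he : 0 < e) :
    ∃ T > 1, ∀ ε > 0, ∀ y ∈ Set.Icc ε (T * ε),
      |(∫ x in (0)..1, g (ofReIm x y)) - ∫ x in (0)..1, g (ofReIm x ε)| ≤ e := by
  obtain ⟨δ, hδ, hnear⟩ := Metric.uniformContinuous_iff.1 hg.uniformContinuous e he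
  refine ⟨Real.exp (δ / 2), Real.one_lt_exp_iff.2 (half_pos hδ), fun ε hε y ⟨hεy, hy⟩ ↦ ?_⟩
  have hy_pos : 0 < y := hε.trans_le hεy
  have hdist (x : ℝ) : dist (ofReIm x y) (ofReIm x ε) < δ := by
    rw [UpperHalfPlane.dist_of_re_eq (by rw [ofReIm_re x hy_pos, ofReIm_re x hε]),
      ofReIm_im x hy_pos, ofReIm_im x hε, Real.dist_eq,
      abs_of_nonneg (sub_nonneg.2 (Real.log_le_log hε hεy))]
    have hlog := Real.log_le_log hy_pos hy
    rw [Real.log_mul (Real.exp_ne_zero _) hε.ne', Real.log_exp] at hlog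
    linarith
  rw [← intervalIntegral.integral_sub ((hg.continuous_comp_ofReIm hy_pos).intervalIntegrable _ _)
    ((hg.continuous_comp_ofReIm hε).intervalIntegrable _ _)]
  simpa using intervalIntegral.norm_integral_le_of_norm_le_const (a := 0) (b := 1) (C := e)
    (f := fun x ↦ g (ofReIm x y) - g (ofReIm x ε)) fun x _ ↦ (hnear (hdist x)).le

lemma tendsto_horocycleIntegral (hg : IsModularTestFunction g) :
    Tendsto (fun y ↦ ∫ x in (0)..1, g (ofReIm x y)) (𝓝[>] 0)
      (𝓝 (3 / Real.pi * ∫ w in ModularGroup.fdo, g w)) := by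
  refine tendsto_of_tendsto_mul_integral_div_sq
    (fun ε hε ↦ hg.integrableOn_horocycleIntegral_div_sq hε) ?_
    fun e he ↦ hg.exists_abs_horocycleIntegral_sub_le he
  refine hg.tendsto_mul_setIntegral_cuspStrip.congr' ?_
  filter_upwards [self_mem_nhdsWithin] with ε hε
  rw [hg.setIntegral_cuspStrip_eq hε]

end IsModularTestFunction

end ClosedHorocycles

section Renormalization

lemma coe_smul_ofReIm_sub (γ : SL(2, ℤ)) {w η : ℝ} (hη : 0 < η) (hj : (γ 1 0 : ℝ) * w + γ 1 1 ≠ 0) :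
    ((γ • ofReIm w η : ℍ) : ℂ) - ((γ 0 0 * w + γ 0 1) / (γ 1 0 * w + γ 1 1) : ℝ) =
      η * I / ((γ 1 0 * w + γ 1 1 : ℝ) * (γ 1 0 * ofReIm w η + γ 1 1)) := by
  have hdenom : (γ 1 0 : ℂ) * ofReIm w η + γ 1 1 ≠ 0 := by
    rw [← ModularGroup.denom_apply]
    exact denom_ne_zero _ _
  have hj' : (γ 1 0 : ℂ) * w + γ 1 1 ≠ 0 := by exact_mod_cast hj
  have hdet : (γ 0 0 : ℂ) * γ 1 1 - γ 0 1 * γ 1 0 = 1 := by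
    exact_mod_cast (Matrix.det_fin_two γ.1).symm.trans γ.2
  rw [UpperHalfPlane.coe_specialLinearGroup_apply]
  simp only [coe_ofReIm w hη, algebraMap_int_eq, eq_intCast, ofReal_intCast, ofReal_div, ofReal_add,
    ofReal_mul] at hdenom ⊢
  rw [div_sub_div _ _ hdenom hj', div_eq_div_iff (mul_ne_zero hdenom hj') (mul_ne_zero hj' hdenom)]
  linear_combination (η * I * (γ 1 0 * w + γ 1 1) * (γ 1 0 * (w + η * I) + γ 1 1)) * hdet

lemma dist_coe_smul_ofReIm (γ : SL(2, ℤ)) {w ε : ℝ} (hε : 0 < ε) (hd : 0 < γ 1 1)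
    (hj : 0 < (γ 1 0 : ℝ) * w + γ 1 1) :
    dist ((γ • ofReIm w (ε * γ 1 1 ^ 2) : ℍ) : ℂ)
        (ofReIm ((γ 0 0 * w + γ 0 1) / (γ 1 0 * w + γ 1 1)) ε) =
      ε * ‖(γ 1 1 : ℂ) ^ 2 - (γ 1 0 * w + γ 1 1 : ℝ) *
          (γ 1 0 * ofReIm w (ε * γ 1 1 ^ 2) + γ 1 1)‖ /
        ((γ 1 0 * w + γ 1 1) * ‖(γ 1 0 : ℂ) * ofReIm w (ε * γ 1 1 ^ 2) + γ 1 1‖) := by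
  have hd' : (0 : ℝ) < γ 1 1 := by exact_mod_cast hd
  have hη : 0 < ε * (γ 1 1 : ℝ) ^ 2 := mul_pos hε (pow_pos hd' 2)
  have hq : (γ 1 0 : ℂ) * ofReIm w (ε * γ 1 1 ^ 2) + γ 1 1 ≠ 0 := by
    rw [← ModularGroup.denom_apply]
    exact denom_ne_zero _ _
  rw [dist_eq_norm, coe_ofReIm _ hε, ← sub_sub, coe_smul_ofReIm_sub γ hη hj.ne']
  set j : ℝ := γ 1 0 * w + γ 1 1
  set q : ℂ := γ 1 0 * ofReIm w (ε * γ 1 1 ^ 2) + γ 1 1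
  have hj' : (j : ℂ) ≠ 0 := by exact_mod_cast hj.ne'
  have hfactor : ((ε * γ 1 1 ^ 2 : ℝ) : ℂ) * I / (j * q) - ε * I =
      ε * I * ((γ 1 1 : ℂ) ^ 2 - j * q) / (j * q) := by
    push_cast
    field_simp
  rw [hfactor]
  simp only [norm_div, norm_mul, norm_I, norm_real, Real.norm_of_nonneg hε.le,
    Real.norm_of_nonneg hj.le, mul_one]

lemma dist_smul_ofReIm_le (γ : SL(2, ℤ)) {w ε : ℝ} (hε : 0 < ε) (hd : 0 < γ 1 1)
    (hj : 0 < (γ 1 0 : ℝ) * w + γ 1 1) :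
    dist (γ • ofReIm w (ε * γ 1 1 ^ 2))
        (ofReIm ((γ 0 0 * w + γ 0 1) / (γ 1 0 * w + γ 1 1)) ε) ≤
      |(γ 1 1 : ℝ) ^ 2 - (γ 1 0 * w + γ 1 1) ^ 2| / ((γ 1 0 * w + γ 1 1) * γ 1 1) +
        |(γ 1 0 : ℝ)| * γ 1 1 * ε := by
  have hd' : (0 : ℝ) < γ 1 1 := by exact_mod_cast hd
  have hη : 0 < ε * (γ 1 1 : ℝ) ^ 2 := mul_pos hε (pow_pos hd' 2)
  refine (UpperHalfPlane.dist_le_dist_coe_div_sqrt _ _).trans ?_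
  rw [dist_coe_smul_ofReIm γ hε hd hj, ModularGroup.im_smul_eq_div_normSq,
    Complex.normSq_eq_norm_sq, ModularGroup.denom_apply, ofReIm_im w hη, ofReIm_im _ hε]
  have hq_pos : 0 < ‖(γ 1 0 : ℂ) * ofReIm w (ε * γ 1 1 ^ 2) + γ 1 1‖ := by
    rw [norm_pos_iff, ← ModularGroup.denom_apply]
    exact denom_ne_zero _ _
  have hq : (γ 1 0 : ℂ) * ofReIm w (ε * γ 1 1 ^ 2) + γ 1 1 =
      (γ 1 0 * w + γ 1 1 : ℝ) + (γ 1 0 * (ε * γ 1 1 ^ 2) : ℝ) * I := by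
    rw [coe_ofReIm w hη]
    push_cast
    ring
  set j : ℝ := γ 1 0 * w + γ 1 1
  set q : ℂ := γ 1 0 * ofReIm w (ε * γ 1 1 ^ 2) + γ 1 1
  have hnorm : ‖(γ 1 1 : ℂ) ^ 2 - j * q‖ ≤
      |(γ 1 1 : ℝ) ^ 2 - j ^ 2| + j * (|(γ 1 0 : ℝ)| * (ε * γ 1 1 ^ 2)) := by
    have hsplit : (γ 1 1 : ℂ) ^ 2 - j * q =
        (γ 1 1 ^ 2 - j ^ 2 : ℝ) - (j * (γ 1 0 * (ε * γ 1 1 ^ 2)) : ℝ) * I := by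
      rw [hq]
      push_cast
      ring
    rw [hsplit]
    refine (norm_sub_le _ _).trans_eq ?_
    simp [-ofReal_mul, -ofReal_sub, norm_real, abs_of_pos hj, abs_of_pos hε]
  calc ε * ‖(γ 1 1 : ℂ) ^ 2 - j * q‖ / (j * ‖q‖) / √(ε * γ 1 1 ^ 2 / ‖q‖ ^ 2 * ε)
      = ‖(γ 1 1 : ℂ) ^ 2 - j * q‖ / (j * γ 1 1) := by
        rw [show ε * (γ 1 1 : ℝ) ^ 2 / ‖q‖ ^ 2 * ε = (ε * γ 1 1 / ‖q‖) ^ 2 by ring,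
          Real.sqrt_sq (by positivity)]
        field_simp
    _ ≤ (|(γ 1 1 : ℝ) ^ 2 - j ^ 2| + j * (|(γ 1 0 : ℝ)| * (ε * γ 1 1 ^ 2))) / (j * γ 1 1) := by
        gcongr
    _ = |(γ 1 1 : ℝ) ^ 2 - j ^ 2| / (j * γ 1 1) + |(γ 1 0 : ℝ)| * γ 1 1 * ε := by field_simp

lemma integral_moebius {a b c d : ℝ} (hdet : a * d - b * c = 1)
    (hj : ∀ w ∈ Set.Icc (0 : ℝ) 1, 0 < c * w + d) {F : ℝ → ℝ} (hF : Continuous F) :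
    ∫ x in (b / d)..((a + b) / (c + d)), F x =
      ∫ w in (0)..1, F ((a * w + b) / (c * w + d)) / (c * w + d) ^ 2 := by
  rw [← Set.uIcc_of_le zero_le_one] at hj
  have hderiv : ∀ w ∈ Set.uIcc (0 : ℝ) 1,
      HasDerivAt (fun w ↦ (a * w + b) / (c * w + d)) (1 / (c * w + d) ^ 2) w := by
    intro w hw
    have hnum : HasDerivAt (fun w ↦ a * w + b) a w := by
      simpa using ((hasDerivAt_id w).const_mul a).add_const b
    have hden : HasDerivAt (fun w ↦ c * w + d) c w := by
      simpa using ((hasDerivAt_id w).const_mul c).add_const d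
    refine (hnum.div hden (hj w hw).ne').congr_deriv ?_
    rw [show a * (c * w + d) - (a * w + b) * c = 1 by linear_combination hdet]
  have hcont : ContinuousOn (fun w ↦ 1 / (c * w + d) ^ 2) (Set.uIcc 0 1) :=
    continuousOn_const.div (by fun_prop) fun w hw ↦ pow_ne_zero 2 (hj w hw).ne'
  have hsubst := intervalIntegral.integral_comp_mul_deriv' hderiv hcont hF.continuousOn
  simpa [div_eq_mul_inv] using hsubst.symm

lemma abs_sq_sub_sq_le {d j τ : ℝ} (hd : 0 < d) (hτ : τ ≤ 1 / 2) (hj : |j - d| ≤ τ * d) :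
    |d ^ 2 - j ^ 2| ≤ 3 * τ * (j * d) := by
  have hj_half : d / 2 ≤ j := by nlinarith [neg_abs_le (j - d)]
  have hτ0 : 0 ≤ τ := nonneg_of_mul_nonneg_left ((abs_nonneg _).trans hj) hd
  calc |d ^ 2 - j ^ 2| = |j - d| * (d + j) := by
        rw [sq_sub_sq, abs_mul, abs_sub_comm, abs_of_pos (by linarith), mul_comm]
    _ ≤ τ * d * (2 * j + j) := by gcongr <;> linarith
    _ = 3 * τ * (j * d) := by ring

lemma abs_div_sq_sub_div_sq_le {d j τ u v e M : ℝ} (hd : 0 < d) (hτ : τ ≤ 1 / 2)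
    (hj : |j - d| ≤ τ * d) (huv : |u - v| ≤ e) (hv : |v| ≤ M) :
    |u / j ^ 2 - v / d ^ 2| ≤ (4 * e + 6 * τ * M) / d ^ 2 := by
  have hj_half : d / 2 ≤ j := by nlinarith [neg_abs_le (j - d)]
  have hj0 : 0 < j := by linarith
  have hτ0 : 0 ≤ τ := nonneg_of_mul_nonneg_left ((abs_nonneg _).trans hj) hd
  have hweight : |d ^ 2 - j ^ 2| / (j ^ 2 * d ^ 2) ≤ 6 * τ / d ^ 2 := by
    calc |d ^ 2 - j ^ 2| / (j ^ 2 * d ^ 2) ≤ 3 * τ * (j * d) / (j ^ 2 * d ^ 2) := by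
          gcongr
          exact abs_sq_sub_sq_le hd hτ hj
      _ = 3 * τ / (j * d) := by field_simp
      _ ≤ 3 * τ / (d / 2 * d) := by gcongr
      _ = 6 * τ / d ^ 2 := by ring
  calc |u / j ^ 2 - v / d ^ 2|
      = |(u - v) / j ^ 2 + v * ((d ^ 2 - j ^ 2) / (j ^ 2 * d ^ 2))| := by
        congr 1
        field_simp
        ring
    _ ≤ |u - v| / j ^ 2 + |v| * (|d ^ 2 - j ^ 2| / (j ^ 2 * d ^ 2)) := by
        refine (abs_add_le _ _).trans_eq ?_
        rw [abs_mul, abs_div, abs_div, abs_of_pos (by positivity : 0 < j ^ 2),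
          abs_of_pos (by positivity : 0 < j ^ 2 * d ^ 2)]
    _ ≤ e / (d / 2) ^ 2 + M * (6 * τ / d ^ 2) := by
        have he : 0 ≤ e := (abs_nonneg _).trans huv
        have hM : 0 ≤ M := (abs_nonneg _).trans hv
        gcongr
    _ = (4 * e + 6 * τ * M) / d ^ 2 := by field_simp; norm_num

lemma tendsto_mul_const_nhdsGT_zero {k : ℝ} (hk : 0 < k) :
    Tendsto (· * k) (𝓝[>] (0 : ℝ)) (𝓝[>] 0) :=
  tendsto_nhdsWithin_iff.2 ⟨tendsto_nhdsWithin_of_tendsto_nhds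
    (Continuous.tendsto' (by fun_prop) 0 0 (zero_mul k)),
    eventually_mem_nhdsWithin.mono fun _ hε ↦ mul_pos hε hk⟩

lemma abs_integral_le_abs_integral_add {F G : ℝ → ℝ} {C : ℝ}
    (hF : IntervalIntegrable F volume 0 1) (hG : IntervalIntegrable G volume 0 1)
    (hFG : ∀ w ∈ Set.Icc (0 : ℝ) 1, |F w - G w| ≤ C) :
    |∫ w in (0)..1, F w| ≤ |∫ w in (0)..1, G w| + C := by
  have hdiff : |(∫ w in (0)..1, F w) - ∫ w in (0)..1, G w| ≤ C := by
    rw [← intervalIntegral.integral_sub hF hG]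
    simpa using intervalIntegral.norm_integral_le_of_norm_le_const (a := 0) (b := 1)
      (f := fun w ↦ F w - G w) fun w hw ↦
        hFG w (Set.Ioc_subset_Icc_self (Set.uIoc_of_le (zero_le_one' ℝ) ▸ hw))
  linarith [abs_sub_abs_le_abs_sub (∫ w in (0)..1, F w) (∫ w in (0)..1, G w)]

variable {h : ℍ → ℝ} {M e ρ τ ε : ℝ}

lemma abs_comp_moebius_div_sq_sub_le (hinv : ∀ (γ : SL(2, ℤ)) (z : ℍ), h (γ • z) = h z)
    (hM : ∀ z, |h z| ≤ M) (hnear : ∀ z z', dist z z' < ρ → |h z - h z'| ≤ e)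
    (γ : SL(2, ℤ)) (hd : 0 < γ 1 1) (hτ : τ ≤ 1 / 2) (hc : |(γ 1 0 : ℝ)| ≤ τ * γ 1 1)
    (hε : 0 < ε) (hρ : 3 * τ + |(γ 1 0 : ℝ)| * γ 1 1 * ε < ρ) {w : ℝ} (hw : w ∈ Set.Icc (0 : ℝ) 1) :
    |h (ofReIm ((γ 0 0 * w + γ 0 1) / (γ 1 0 * w + γ 1 1)) ε) / (γ 1 0 * w + γ 1 1) ^ 2 -
        h (ofReIm w (ε * γ 1 1 ^ 2)) / (γ 1 1 : ℝ) ^ 2| ≤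
      (4 * e + 6 * τ * M) / (γ 1 1 : ℝ) ^ 2 := by
  have hd' : (0 : ℝ) < γ 1 1 := by exact_mod_cast hd
  have hj : |(γ 1 0 * w + γ 1 1 : ℝ) - γ 1 1| ≤ τ * γ 1 1 := by
    rw [add_sub_cancel_right, abs_mul, abs_of_nonneg hw.1]
    exact (mul_le_of_le_one_right (abs_nonneg _) hw.2).trans hc
  have hj0 : (0 : ℝ) < γ 1 0 * w + γ 1 1 := by
    nlinarith [neg_abs_le ((γ 1 0 : ℝ) * w + γ 1 1 - γ 1 1)]
  refine abs_div_sq_sub_div_sq_le hd' hτ hj ?_ (hM _)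
  rw [← hinv γ (ofReIm w _)]
  refine hnear _ _ ?_
  rw [dist_comm]
  refine (dist_smul_ofReIm_le γ hε hd hj0).trans_lt (lt_of_le_of_lt ?_ hρ)
  gcongr
  rw [div_le_iff₀ (by positivity)]
  exact abs_sq_sub_sq_le hd' hτ hj

lemma abs_integral_moebius_le (hcont : Continuous h)
    (hinv : ∀ (γ : SL(2, ℤ)) (z : ℍ), h (γ • z) = h z)
    (hM : ∀ z, |h z| ≤ M) (hnear : ∀ z z', dist z z' < ρ → |h z - h z'| ≤ e)
    (γ : SL(2, ℤ)) (hd : 0 < γ 1 1) (hτ : τ ≤ 1 / 2) (hc : |(γ 1 0 : ℝ)| ≤ τ * γ 1 1)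
    (hε : 0 < ε) (hρ : 3 * τ + |(γ 1 0 : ℝ)| * γ 1 1 * ε < ρ) :
    |∫ x in (γ 0 1 / γ 1 1 : ℝ)..((γ 0 0 + γ 0 1) / (γ 1 0 + γ 1 1)), h (ofReIm x ε)| ≤
      (|∫ w in (0 : ℝ)..1, h (ofReIm w (ε * γ 1 1 ^ 2))| + (4 * e + 6 * τ * M)) /
        (γ 1 1 : ℝ) ^ 2 := by
  have hd' : (0 : ℝ) < γ 1 1 := by exact_mod_cast hd
  have hdet : (γ 0 0 : ℝ) * γ 1 1 - γ 0 1 * γ 1 0 = 1 := by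
    exact_mod_cast (Matrix.det_fin_two γ.1).symm.trans γ.2
  have hj : ∀ w ∈ Set.Icc (0 : ℝ) 1, (0 : ℝ) < γ 1 0 * w + γ 1 1 := fun w hw ↦ by
    nlinarith [neg_abs_le (γ 1 0 : ℝ), hw.1, hw.2, abs_nonneg (γ 1 0 : ℝ)]
  have hrow : ∀ {y : ℝ}, 0 < y → Continuous fun x ↦ h (ofReIm x y) :=
    fun hy ↦ hcont.comp (continuous_ofReIm hy)
  rw [integral_moebius hdet hj (hrow hε)]
  have hint_moebius : IntervalIntegrable (fun w ↦
      h (ofReIm ((γ 0 0 * w + γ 0 1) / (γ 1 0 * w + γ 1 1)) ε) / (γ 1 0 * w + γ 1 1 : ℝ) ^ 2)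
      volume 0 1 := by
    rw [← Set.uIcc_of_le zero_le_one] at hj
    refine ContinuousOn.intervalIntegrable (ContinuousOn.div ?_ (by fun_prop)
      fun w hw ↦ pow_ne_zero 2 (hj w hw).ne')
    exact (hrow hε).comp_continuousOn
      (ContinuousOn.div (by fun_prop) (by fun_prop) fun w hw ↦ (hj w hw).ne')
  have hint : IntervalIntegrable (fun w ↦ h (ofReIm w (ε * γ 1 1 ^ 2)) / (γ 1 1 : ℝ) ^ 2)
      volume 0 1 := ((hrow (by positivity)).div_const _).intervalIntegrable _ _
  refine (abs_integral_le_abs_integral_add hint_moebius hint fun w hw ↦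
    abs_comp_moebius_div_sq_sub_le hinv hM hnear γ hd hτ hc hε hρ hw).trans_eq ?_
  rw [intervalIntegral.integral_div, abs_div, abs_sq, ← add_div]

lemma exists_pos_le_half_le_mul_le {ρ δ M : ℝ} (hρ : 0 < ρ) (hδ : 0 < δ) (hM : 0 ≤ M) :
    ∃ τ > 0, τ ≤ 1 / 2 ∧ τ ≤ ρ ∧ τ * M ≤ δ := by
  refine ⟨min (1 / 2) (min ρ (δ / (M + 1))), by positivity, min_le_left _ _,
    (min_le_right _ _).trans (min_le_left _ _), ?_⟩
  calc min (1 / 2) (min ρ (δ / (M + 1))) * M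
      ≤ δ / (M + 1) * (M + 1) := by
        gcongr
        · exact (min_le_right _ _).trans (min_le_right _ _)
        · exact le_add_of_nonneg_right zero_le_one
    _ = δ := by field_simp

lemma exists_forall_eventually_abs_integral_moebius_le (huc : UniformContinuous h)
    (hinv : ∀ (γ : SL(2, ℤ)) (z : ℍ), h (γ • z) = h z) (hM : ∀ z, |h z| ≤ M)
    (hmean : Tendsto (fun ε ↦ ∫ x in (0 : ℝ)..1, h (ofReIm x ε)) (𝓝[>] 0) (𝓝 0))
    {δ : ℝ} (hδ : 0 < δ) :
    ∃ τ > 0, ∀ γ : SL(2, ℤ), 0 < γ 1 1 → |(γ 1 0 : ℝ)| ≤ τ * γ 1 1 → ∀ᶠ ε in 𝓝[>] (0 : ℝ),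
      |∫ x in (γ 0 1 / γ 1 1 : ℝ)..((γ 0 0 + γ 0 1) / (γ 1 0 + γ 1 1)), h (ofReIm x ε)| ≤
        δ / (γ 1 1 * (γ 1 0 + γ 1 1)) := by
  have hM0 : 0 ≤ M := (abs_nonneg _).trans (hM UpperHalfPlane.I)
  obtain ⟨ρ, hρ, hnear⟩ := Metric.uniformContinuous_iff.1 huc (δ / 20) (by positivity)
  obtain ⟨τ, hτ0, hτ_half, hτρ, hτM⟩ :=
    exists_pos_le_half_le_mul_le (show 0 < ρ / 6 by positivity) (show 0 < δ / 60 by positivity) hM0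
  refine ⟨τ, hτ0, fun γ hd hc ↦ ?_⟩
  have hd' : (0 : ℝ) < γ 1 1 := by exact_mod_cast hd
  have hsmall : ∀ᶠ ε in 𝓝[>] (0 : ℝ), |(γ 1 0 : ℝ)| * γ 1 1 * ε < ρ / 2 :=
    (tendsto_nhdsWithin_of_tendsto_nhds (Continuous.tendsto' (by fun_prop) 0 0 (mul_zero _)))
      |>.eventually_lt_const (by positivity)
  have hmean_small : ∀ᶠ ε in 𝓝[>] (0 : ℝ),
      |∫ w in (0 : ℝ)..1, h (ofReIm w (ε * γ 1 1 ^ 2))| < δ / 10 := by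
    have hmean' := hmean.comp (tendsto_mul_const_nhdsGT_zero (k := (γ 1 1 : ℝ) ^ 2) (by positivity))
    exact hmean'.abs.eventually_lt_const (by simpa using hδ)
  filter_upwards [hsmall, hmean_small, self_mem_nhdsWithin] with ε hsmall hmean hε
  have hbound := abs_integral_moebius_le huc.continuous hinv hM
    (fun z z' hz ↦ (hnear hz).le) γ hd hτ_half hc hε (by linarith)
  refine hbound.trans ?_
  have hsum : (0 : ℝ) < γ 1 0 + γ 1 1 := by nlinarith [neg_abs_le (γ 1 0 : ℝ)]
  calc (|∫ w in (0 : ℝ)..1, h (ofReIm w (ε * γ 1 1 ^ 2))| + (4 * (δ / 20) + 6 * τ * M)) /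
        (γ 1 1 : ℝ) ^ 2
      ≤ (δ / 2) / (γ 1 1 : ℝ) ^ 2 := by gcongr; linarith
    _ = δ / (γ 1 1 * (2 * γ 1 1)) := by field_simp
    _ ≤ δ / (γ 1 1 * (γ 1 0 + γ 1 1)) := by
        gcongr
        nlinarith [le_abs_self (γ 1 0 : ℝ)]

end Renormalization

section Rigidity

lemma exists_rat_abs_sub_lt_one_div_den_sq_and_lt_den {x : ℝ} (hx : Irrational x) (m : ℕ) :
    ∃ q : ℚ, |x - q| < 1 / (q.den : ℝ) ^ 2 ∧ m < q.den := by
  obtain ⟨κ, hκ, hfar⟩ : ∃ κ > 0, ∀ q : ℚ, q.den ≤ m → κ ≤ dist x q :=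
    ((eventually_mem_nhdsWithin (a := (0 : ℝ)) (s := Set.Ioi 0)).and
      (hx.eventually_forall_le_dist_cast_rat_of_den_le m |>.filter_mono inf_le_left)).exists
  obtain ⟨n, hn⟩ := exists_nat_one_div_lt hκ
  obtain ⟨q, hq, hden⟩ := Real.exists_rat_abs_sub_le_and_den_le x n.succ_pos
  have hden_pos : (0 : ℝ) < q.den := by exact_mod_cast q.pos
  have hden_le : (q.den : ℝ) ≤ n + 1 := by exact_mod_cast hden
  push_cast at hq
  refine ⟨q, hq.trans_lt ?_, lt_of_not_ge fun hle ↦ (hfar q hle).not_gt ?_⟩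
  · rw [sq]
    gcongr
    linarith
  · rw [Real.dist_eq]
    refine (hq.trans ?_).trans_lt hn
    gcongr
    have hone : (1 : ℝ) ≤ q.den := by exact_mod_cast q.pos
    nlinarith

lemma exists_SL2Z_column_eq (q : ℚ) (N : ℕ) :
    ∃ γ : SL(2, ℤ),
      γ 0 0 = q.num ∧ γ 1 0 = q.den ∧ q.den * N ≤ γ 1 1 ∧ γ 1 1 < q.den * (N + 1) := by
  obtain ⟨u, v, huv⟩ := q.isCoprime_num_den
  have hden : (0 : ℤ) < q.den := by exact_mod_cast q.pos
  refine ⟨⟨!![q.num, -v + q.num * (N - u / q.den); q.den, u % q.den + q.den * N], ?_⟩,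
    rfl, rfl, ?_, ?_⟩
  · rw [Matrix.det_fin_two_of]
    linear_combination huv + q.num * Int.emod_add_mul_ediv u q.den
  · simpa using Int.emod_nonneg u hden.ne'
  · have := Int.emod_lt_of_pos u hden
    simp only [Matrix.of_apply, Matrix.cons_val_one, Matrix.cons_val_fin_one]
    linarith

lemma exists_SL2Z_abs_sub_lt {x : ℝ} (hx : Irrational x) (N : ℕ) {r : ℝ} (hr : 0 < r) :
    ∃ γ : SL(2, ℤ), 0 < γ 1 0 ∧ γ 1 0 * N ≤ γ 1 1 ∧ γ 1 1 < γ 1 0 * (N + 1) ∧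
      |x - γ 0 0 / γ 1 0| < 1 / (γ 1 0 : ℝ) ^ 2 ∧ 2 / (γ 1 0 : ℝ) ^ 2 < r := by
  obtain ⟨m, hm⟩ := exists_nat_gt (2 / r)
  obtain ⟨q, hxq, hmq⟩ := exists_rat_abs_sub_lt_one_div_den_sq_and_lt_den hx m
  obtain ⟨γ, hnum, hden, hle, hlt⟩ := exists_SL2Z_column_eq q N
  rw [← hden] at hle hlt
  refine ⟨γ, hden ▸ by exact_mod_cast q.pos, hle, hlt, ?_, ?_⟩
  · simpa [hnum, hden, ← Rat.cast_def] using hxq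
  · have hone : (1 : ℝ) ≤ q.den := by exact_mod_cast q.pos
    have hlarge : 2 / r < q.den := hm.trans (by exact_mod_cast hmq)
    rw [div_lt_iff₀ hr] at hlarge
    rw [hden, Int.cast_natCast, div_lt_iff₀ (by positivity)]
    nlinarith

lemma abs_sub_lt_of_det_eq_one {a b c d x : ℝ} (hdet : a * d - b * c = 1) (hc : 0 < c) (hcd : c ≤ d)
    (hx : |x - a / c| < 1 / c ^ 2) : |b / d - x| < 2 / c ^ 2 := by
  have hd : 0 < d := hc.trans_le hcd
  have hgap : |a / c - b / d| ≤ 1 / c ^ 2 := by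
    rw [div_sub_div _ _ hc.ne' hd.ne', show a * d - c * b = 1 by linarith,
      abs_of_pos (by positivity), sq]
    gcongr
  calc |b / d - x| = |(x - a / c) + (a / c - b / d)| := by rw [abs_sub_comm]; congr 1; ring
    _ ≤ |x - a / c| + |a / c - b / d| := abs_add_le _ _
    _ < 1 / c ^ 2 + 1 / c ^ 2 := add_lt_add_of_lt_of_le hx hgap
    _ = 2 / c ^ 2 := by ring

lemma abs_slope_le_of_det_eq_one {Φ : ℝ → ℝ} {a b c d x L δ κ N : ℝ}
    (hdet : a * d - b * c = 1) (hc : 0 < c) (hcd : c ≤ d) (hdc : d ≤ c * (N + 1)) (hκ : 0 ≤ κ)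
    (hx : |x - a / c| < 1 / c ^ 2)
    (hlin : ∀ y, |y - x| < 2 / c ^ 2 → |Φ y - Φ x - (y - x) * L| ≤ κ * |y - x|)
    (hincr : |Φ ((a + b) / (c + d)) - Φ (b / d)| ≤ δ / (d * (c + d))) :
    |L| ≤ δ + 4 * κ * ((N + 1) * (N + 2)) := by
  have hd : 0 < d := hc.trans_le hcd
  have hu := abs_sub_lt_of_det_eq_one hdet hc hcd hx
  have hv := abs_sub_lt_of_det_eq_one (b := a + b) (d := c + d)
    (by linear_combination hdet) hc (by linarith) hx
  have hlin_u := (hlin _ hu).trans (mul_le_mul_of_nonneg_left hu.le hκ)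
  have hlin_v := (hlin _ hv).trans (mul_le_mul_of_nonneg_left hv.le hκ)
  set u := b / d
  set v := (a + b) / (c + d)
  have hlength : v - u = 1 / (d * (c + d)) := by
    rw [div_sub_div _ _ (by positivity) hd.ne', mul_comm d (c + d)]
    congr 1
    linear_combination hdet
  have hslope : |L| * (1 / (d * (c + d))) ≤ δ / (d * (c + d)) + 4 * κ / c ^ 2 := by
    calc |L| * (1 / (d * (c + d))) = |(v - u) * L| := by
          rw [hlength, abs_mul, mul_comm, abs_of_pos (by positivity : 0 < 1 / (d * (c + d)))]
      _ = |(Φ v - Φ u) + (Φ u - Φ x - (u - x) * L) - (Φ v - Φ x - (v - x) * L)| := by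
          congr 1
          ring
      _ ≤ δ / (d * (c + d)) + κ * (2 / c ^ 2) + κ * (2 / c ^ 2) :=
          (abs_sub _ _).trans (add_le_add ((abs_add_le _ _).trans (add_le_add hincr hlin_u)) hlin_v)
      _ = δ / (d * (c + d)) + 4 * κ / c ^ 2 := by ring
  rw [mul_one_div, div_le_iff₀ (by positivity)] at hslope
  calc |L| ≤ (δ / (d * (c + d)) + 4 * κ / c ^ 2) * (d * (c + d)) := hslope
    _ = δ + 4 * κ * (d * (c + d) / c ^ 2) := by field_simp
    _ ≤ δ + 4 * κ * ((N + 1) * (N + 2)) := by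
        gcongr
        rw [div_le_iff₀ (by positivity)]
        nlinarith [mul_le_mul hdc (show c + d ≤ c * (N + 2) by linarith) (by positivity)
          (by linarith : (0 : ℝ) ≤ c * (N + 1))]

/-- The interval from `γ • 0 = b / d` to `γ • 1 = (a + b) / (c + d)` has length `1 / (d (c + d))`;
`Φ` has small Möbius increments if its slopes over these intervals tend to `0` as `c / d → 0`,
that is, as `γ` becomes close to affine on `[0, 1]`. -/
def HasSmallMoebiusIncrements (Φ : ℝ → ℝ) : Prop :=
  ∀ δ > 0, ∃ τ > 0, ∀ γ : SL(2, ℤ), 0 < γ 1 1 → |(γ 1 0 : ℝ)| ≤ τ * γ 1 1 →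
    |Φ ((γ 0 0 + γ 0 1) / (γ 1 0 + γ 1 1)) - Φ (γ 0 1 / γ 1 1)| ≤ δ / (γ 1 1 * (γ 1 0 + γ 1 1))

variable {Φ : ℝ → ℝ}

lemma HasSmallMoebiusIncrements.eq_zero_of_hasDerivAt (hΦ : HasSmallMoebiusIncrements Φ)
    {x L : ℝ} (hx : Irrational x) (hL : HasDerivAt Φ L x) : L = 0 := by
  refine abs_nonpos_iff.1 (le_of_forall_pos_le_add fun δ hδ ↦ ?_)
  obtain ⟨τ, hτ, hsmall⟩ := hΦ (δ / 2) (half_pos hδ)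
  obtain ⟨N, hN⟩ := exists_nat_gt (max 1 (1 / τ))
  have hN1 : (1 : ℝ) < N := (le_max_left _ _).trans_lt hN
  have hNτ : 1 < N * τ := (div_lt_iff₀ hτ).1 ((le_max_right _ _).trans_lt hN)
  have hκ : 0 < δ / (8 * ((N + 1) * (N + 2))) := by positivity
  obtain ⟨r, hr, hlin⟩ := Metric.eventually_nhds_iff.1 (hL.isLittleO.def hκ)
  obtain ⟨γ, hc, hcd, hdc, hxγ, hcr⟩ := exists_SL2Z_abs_sub_lt hx N hr
  have hdet : (γ 0 0 : ℝ) * γ 1 1 - γ 0 1 * γ 1 0 = 1 := by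
    exact_mod_cast (Matrix.det_fin_two γ.1).symm.trans γ.2
  replace hc : (0 : ℝ) < γ 1 0 := by exact_mod_cast hc
  replace hcd : (γ 1 0 : ℝ) * N ≤ γ 1 1 := by exact_mod_cast hcd
  replace hdc : (γ 1 1 : ℝ) < γ 1 0 * (N + 1) := by exact_mod_cast hdc
  have hc_le : (γ 1 0 : ℝ) ≤ γ 1 1 := by nlinarith
  have hincr := hsmall γ (by exact_mod_cast hc.trans_le hc_le) (by rw [abs_of_pos hc]; nlinarith)
  refine (abs_slope_le_of_det_eq_one hdet hc hc_le hdc.le hκ.le hxγ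
    (fun y hy ↦ hlin (hy.trans hcr)) hincr).trans_eq ?_
  field_simp
  ring

lemma ae_irrational : ∀ᵐ x : ℝ, Irrational x :=
  (Set.countable_range ((↑) : ℚ → ℝ)).ae_notMem volume

lemma HasSmallMoebiusIncrements.eq_of_lipschitzWith (hΦ : HasSmallMoebiusIncrements Φ)
    {K : NNReal} (hlip : LipschitzWith K Φ) (s t : ℝ) : Φ s = Φ t := by
  have hderiv : ∀ᵐ x, HasDerivAt Φ 0 x := by
    filter_upwards [hlip.ae_differentiableAt_real, ae_irrational] with x hdiff hx
    exact hΦ.eq_zero_of_hasDerivAt hx hdiff.hasDerivAt ▸ hdiff.hasDerivAt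
  have hac : AbsolutelyContinuousOnInterval Φ s t :=
    hlip.lipschitzOnWith.absolutelyContinuousOnInterval
  obtain ⟨C, hC⟩ := hac.const_of_ae_hasDerivAt_zero (hderiv.mono fun _ hx _ ↦ hx)
  rw [hC s Set.left_mem_uIcc, hC t Set.right_mem_uIcc]

end Rigidity

section Subintervals

lemma exists_tendsto_ultrafilter_of_abs_le {α : Type*} (𝒰 : Ultrafilter α) {F : α → ℝ} {B : ℝ}
    (hF : ∀ a, |F a| ≤ B) : ∃ L, Tendsto F 𝒰 (𝓝 L) := by
  have hmem : Set.Icc (-B) B ∈ 𝒰.map F :=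
    Ultrafilter.mem_map.2 (univ_mem' fun a ↦ abs_le.1 (hF a))
  obtain ⟨L, -, hL⟩ := isCompact_Icc.ultrafilter_le_nhds' (𝒰.map F) hmem
  exact ⟨L, hL⟩

variable {h : ℍ → ℝ} {M : ℝ}

lemma abs_integral_comp_ofReIm_le (hM : ∀ z, |h z| ≤ M) (s t ε : ℝ) :
    |∫ x in s..t, h (ofReIm x ε)| ≤ M * |t - s| :=
  intervalIntegral.norm_integral_le_of_norm_le_const (f := fun x ↦ h (ofReIm x ε)) fun _ _ ↦ hM _

lemma tendsto_integral_comp_ofReIm_zero (huc : UniformContinuous h)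
    (hinv : ∀ (γ : SL(2, ℤ)) (z : ℍ), h (γ • z) = h z) (hM : ∀ z, |h z| ≤ M)
    (hmean : Tendsto (fun ε ↦ ∫ x in (0 : ℝ)..1, h (ofReIm x ε)) (𝓝[>] 0) (𝓝 0)) (t : ℝ) :
    Tendsto (fun ε ↦ ∫ x in (0 : ℝ)..t, h (ofReIm x ε)) (𝓝[>] 0) (𝓝 0) := by
  have hM0 : 0 ≤ M := (abs_nonneg _).trans (hM UpperHalfPlane.I)
  refine tendsto_iff_ultrafilter _ _ _ |>.2 fun 𝒰 h𝒰 ↦ ?_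
  choose Φ hΦ using fun t ↦
    exists_tendsto_ultrafilter_of_abs_le 𝒰 (abs_integral_comp_ofReIm_le hM 0 t)
  have hΦ_sub : ∀ s t, Tendsto (fun ε ↦ ∫ x in s..t, h (ofReIm x ε)) 𝒰 (𝓝 (Φ t - Φ s)) := by
    refine fun s t ↦ ((hΦ t).sub (hΦ s)).congr' ?_
    filter_upwards [h𝒰 self_mem_nhdsWithin] with ε hε
    have hrow : Continuous fun x ↦ h (ofReIm x ε) := huc.continuous.comp (continuous_ofReIm hε)
    exact intervalIntegral.integral_interval_sub_left
      (hrow.intervalIntegrable _ _) (hrow.intervalIntegrable _ _)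
  have hlip : LipschitzWith ⟨M, hM0⟩ Φ := LipschitzWith.of_dist_le_mul fun t s ↦
    le_of_tendsto (hΦ_sub s t).abs (.of_forall fun ε ↦ abs_integral_comp_ofReIm_le hM s t ε)
  have hincr : HasSmallMoebiusIncrements Φ := by
    intro δ hδ
    obtain ⟨τ, hτ, hsmall⟩ :=
      exists_forall_eventually_abs_integral_moebius_le huc hinv hM hmean hδ
    exact ⟨τ, hτ, fun γ hd hc ↦ le_of_tendsto (hΦ_sub _ _).abs (h𝒰 (hsmall γ hd hc))⟩
  simpa [hincr.eq_of_lipschitzWith hlip t 0] using hΦ_sub 0 t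

end Subintervals

section AbsolutelyContinuousMeasures

open scoped ContDiff

variable {ι : Type*} {l : Filter ι} {G : ι → ℝ → ℝ} {M : ℝ}

lemma integral_mul_eq_neg_integral_deriv_mul_integral {φ F : ℝ → ℝ} (hφ : ContDiff ℝ 1 φ)
    (hφ_supp : HasCompactSupport φ) (hF : Continuous F) :
    ∫ x, φ x * F x = -∫ x, deriv φ x * ∫ s in (0)..x, F s := by
  have hP : Continuous fun x ↦ ∫ s in (0)..x, F s :=
    intervalIntegral.continuous_primitive (fun _ _ ↦ hF.intervalIntegrable _ _) 0
  refine integral_mul_deriv_eq_deriv_mul_of_integrable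
    (fun x _ ↦ (hφ.differentiable one_ne_zero x).hasDerivAt)
    (fun x _ ↦ intervalIntegral.integral_hasDerivAt_right (hF.intervalIntegrable _ _)
      (hF.stronglyMeasurableAtFilter _ _) hF.continuousAt) ?_ ?_ ?_
  · exact (hφ.continuous.mul hF).integrable_of_hasCompactSupport hφ_supp.mul_right
  · exact ((hφ.continuous_deriv le_rfl).mul hP).integrable_of_hasCompactSupport
      hφ_supp.deriv.mul_right
  · exact (hφ.continuous.mul hP).integrable_of_hasCompactSupport hφ_supp.mul_right

lemma tendsto_integral_mul_of_contDiff [l.IsCountablyGenerated]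
    (hG : ∀ᶠ i in l, Continuous (G i)) (hM : ∀ i x, |G i x| ≤ M)
    (hlim : ∀ t, Tendsto (fun i ↦ ∫ x in (0)..t, G i x) l (𝓝 0))
    {φ : ℝ → ℝ} (hφ : ContDiff ℝ 1 φ) (hφ_supp : HasCompactSupport φ) :
    Tendsto (fun i ↦ ∫ x, φ x * G i x) l (𝓝 0) := by
  have hparts : (fun i ↦ -∫ x, deriv φ x * ∫ s in (0)..x, G i s) =ᶠ[l] fun i ↦ ∫ x, φ x * G i x :=
    hG.mono fun i hi ↦ (integral_mul_eq_neg_integral_deriv_mul_integral hφ hφ_supp hi).symm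
  have hderiv : Continuous (deriv φ) := hφ.continuous_deriv le_rfl
  refine Tendsto.congr' hparts ?_
  have hdom : Tendsto (fun i ↦ ∫ x, deriv φ x * ∫ s in (0)..x, G i s) l
      (𝓝 (∫ x, deriv φ x * 0)) := by
    refine tendsto_integral_filter_of_dominated_convergence (fun x ↦ |deriv φ x| * (M * |x|)) ?_
      (.of_forall fun i ↦ .of_forall fun x ↦ ?_) ?_ (.of_forall fun x ↦ (hlim x).const_mul _)
    · filter_upwards [hG] with i hi
      exact (hderiv.mul (intervalIntegral.continuous_primitive
        (fun _ _ ↦ hi.intervalIntegrable _ _) 0)).aestronglyMeasurable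
    · rw [norm_mul]
      gcongr
      · exact le_rfl
      · simpa using intervalIntegral.norm_integral_le_of_norm_le_const (f := G i)
          (a := 0) (b := x) fun s _ ↦ hM i s
    · exact (hderiv.abs.mul (by fun_prop)).integrable_of_hasCompactSupport
        (hφ_supp.deriv.norm.mul_right)
  simpa using hdom.neg

lemma exists_contDiff_integral_norm_sub_le {φ : ℝ → ℝ} (hφ : Integrable φ) {e : ℝ} (he : 0 < e) :
    ∃ ψ : ℝ → ℝ, HasCompactSupport ψ ∧ ContDiff ℝ ∞ ψ ∧ ∫ x, ‖φ x - ψ x‖ ≤ e := by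
  obtain ⟨ψ, hψ_supp, hψ, hclose⟩ :=
    (memLp_one_iff_integrable.2 hφ).exist_eLpNorm_sub_le ENNReal.one_ne_top le_rfl he
  have hψ_int : Integrable ψ := hψ.continuous.integrable_of_hasCompactSupport hψ_supp
  refine ⟨ψ, hψ_supp, hψ, ?_⟩
  rw [eLpNorm_one_eq_lintegral_enorm] at hclose
  exact (integral_norm_eq_lintegral_enorm (hφ.sub hψ_int).aestronglyMeasurable).trans_le
    (ENNReal.toReal_le_of_le_ofReal he.le hclose)

lemma abs_integral_mul_sub_integral_mul_le {φ ψ F : ℝ → ℝ} (hφ : Integrable φ) (hψ : Integrable ψ)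
    (hF : Continuous F) (hM : ∀ x, |F x| ≤ M) :
    |(∫ x, φ x * F x) - ∫ x, ψ x * F x| ≤ (∫ x, ‖φ x - ψ x‖) * M := by
  have hmul : ∀ {χ : ℝ → ℝ}, Integrable χ → Integrable fun x ↦ χ x * F x :=
    fun hχ ↦ hχ.mul_bdd (c := M) hF.aestronglyMeasurable (.of_forall hM)
  rw [← integral_sub (hmul hφ) (hmul hψ), ← integral_mul_const]
  refine norm_integral_le_of_norm_le (f := fun x ↦ φ x * F x - ψ x * F x)
    ((hφ.sub hψ).norm.mul_const M) (.of_forall fun x ↦ ?_)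
  rw [← sub_mul, norm_mul]
  exact mul_le_mul_of_nonneg_left (hM x) (norm_nonneg _)

lemma tendsto_integral_mul_of_integrable [l.IsCountablyGenerated]
    (hG : ∀ᶠ i in l, Continuous (G i)) (hM : ∀ i x, |G i x| ≤ M)
    (hlim : ∀ t, Tendsto (fun i ↦ ∫ x in (0)..t, G i x) l (𝓝 0))
    {φ : ℝ → ℝ} (hφ : Integrable φ) :
    Tendsto (fun i ↦ ∫ x, φ x * G i x) l (𝓝 0) := by
  rw [Metric.tendsto_nhds]
  intro e he
  obtain ⟨ψ, hψ_supp, hψ, hclose⟩ :=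
    exists_contDiff_integral_norm_sub_le hφ (e := e / (2 * (|M| + 1))) (by positivity)
  have hψ_int : Integrable ψ := hψ.continuous.integrable_of_hasCompactSupport hψ_supp
  have hψ_lim := tendsto_integral_mul_of_contDiff hG hM hlim (hψ.of_le (by simp)) hψ_supp
  filter_upwards [hG, Metric.tendsto_nhds.1 hψ_lim (e / 2) (half_pos he)] with i hi hsmall
  have hdiff : |(∫ x, φ x * G i x) - ∫ x, ψ x * G i x| < e / 2 := by
    calc |(∫ x, φ x * G i x) - ∫ x, ψ x * G i x|
        ≤ (∫ x, ‖φ x - ψ x‖) * |M| :=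
          abs_integral_mul_sub_integral_mul_le hφ hψ_int hi fun x ↦ (hM i x).trans (le_abs_self M)
      _ ≤ e / (2 * (|M| + 1)) * |M| := by gcongr
      _ < e / 2 := by
          rw [div_mul_eq_mul_div, div_lt_div_iff₀ (by positivity) two_pos]
          nlinarith
  rw [dist_zero_right, Real.norm_eq_abs] at hsmall ⊢
  linarith [abs_sub_abs_le_abs_sub (∫ x, φ x * G i x) (∫ x, ψ x * G i x)]

lemma tendsto_integral_of_absolutelyContinuous [l.IsCountablyGenerated] {η : Measure ℝ}
    [IsFiniteMeasure η] (hη : η ≪ volume)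
    (hG : ∀ᶠ i in l, Continuous (G i)) (hM : ∀ i x, |G i x| ≤ M)
    (hlim : ∀ t, Tendsto (fun i ↦ ∫ x in (0)..t, G i x) l (𝓝 0)) :
    Tendsto (fun i ↦ ∫ x, G i x ∂η) l (𝓝 0) := by
  refine (tendsto_integral_mul_of_integrable hG hM hlim
    (Measure.integrable_toReal_rnDeriv (μ := η))).congr fun i ↦ ?_
  exact integral_rnDeriv_smul hη

end AbsolutelyContinuousMeasures

lemma IsModularTestFunction.tendsto_integral_comp_ofReIm {g : ℍ → ℝ} (hg : IsModularTestFunction g)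
    {η : Measure ℝ} [IsProbabilityMeasure η] (hη : η ≪ volume) :
    Tendsto (fun ε ↦ ∫ x, g (ofReIm x ε) ∂η) (𝓝[>] 0)
      (𝓝 (3 / Real.pi * ∫ w in ModularGroup.fdo, g w)) := by
  set C := 3 / Real.pi * ∫ w in ModularGroup.fdo, g w
  obtain ⟨M, hM⟩ := hg.exists_abs_le
  have hM' : ∀ z, |g z - C| ≤ M + |C| := fun z ↦ (abs_sub _ _).trans (by gcongr; exact hM z)
  have huc : UniformContinuous fun z ↦ g z - C := hg.uniformContinuous.sub uniformContinuous_const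
  have hmean : Tendsto (fun ε ↦ ∫ x in (0 : ℝ)..1, (g (ofReIm x ε) - C)) (𝓝[>] 0) (𝓝 0) := by
    have hsub := hg.tendsto_horocycleIntegral.sub_const C
    rw [sub_self] at hsub
    refine hsub.congr' ?_
    filter_upwards [self_mem_nhdsWithin] with ε hε
    rw [intervalIntegral.integral_sub ((hg.continuous_comp_ofReIm hε).intervalIntegrable _ _)
      intervalIntegrable_const]
    simp
  have hzero : Tendsto (fun ε ↦ ∫ x, (g (ofReIm x ε) - C) ∂η) (𝓝[>] 0) (𝓝 0) :=
    tendsto_integral_of_absolutelyContinuous hη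
      (eventually_mem_nhdsWithin.mono fun _ hε ↦ huc.continuous.comp (continuous_ofReIm hε))
      (fun ε x ↦ hM' (ofReIm x ε))
      (tendsto_integral_comp_ofReIm_zero huc (fun γ z ↦ by rw [hg.smul_eq]) hM' hmean)
  rw [← zero_add C]
  refine (hzero.add_const C).congr' ?_
  filter_upwards [self_mem_nhdsWithin] with ε hε
  rw [integral_sub (.of_bound (hg.continuous_comp_ofReIm hε).aestronglyMeasurable M
    (.of_forall fun x ↦ hM _)) (integrable_const _)]
  simp

lemma isModularTestFunction_coe {f : ℂ → ℝ} (hcont : ContinuousOn f {z : ℂ | 0 < z.im})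
    (hinv : ∀ a b c d : ℤ, a * d - b * c = 1 → ∀ z : ℂ, 0 < z.im →
      f (((a : ℂ) * z + b) / ((c : ℂ) * z + d)) = f z)
    (hsupp : ∃ Y : ℝ, 0 < Y ∧ ∀ z : ℂ, 0 < z.im →
      (∃ a b c d : ℤ, a * d - b * c = 1 ∧
        Y < ((((a : ℂ) * z + b) / ((c : ℂ) * z + d)).im)) → f z = 0) :
    IsModularTestFunction (fun z ↦ f z) where
  continuous := hcont.comp_continuous UpperHalfPlane.continuous_coe fun z ↦ z.im_pos
  smul_eq γ z := by
    have hdet : γ 0 0 * γ 1 1 - γ 0 1 * γ 1 0 = 1 := (Matrix.det_fin_two γ.1).symm.trans γ.2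
    rw [← hinv _ _ _ _ hdet z z.im_pos, UpperHalfPlane.coe_specialLinearGroup_apply]
    simp
  exists_im_bound := by
    obtain ⟨Y, -, hY⟩ := hsupp
    exact ⟨Y, fun z hz ↦ hY z z.im_pos ⟨1, 0, 0, 1, by norm_num, by simpa using hz⟩⟩

end Horocycle

theorem horocycles_equidistribute_ac_measure_general
    (η : Measure ℝ) [IsProbabilityMeasure η]
    (hη_ac : η ≪ volume)
    (f : ℂ → ℝ)
    (hcont : ContinuousOn f {z : ℂ | 0 < z.im})
    (hinv : ∀ a b c d : ℤ, a * d - b * c = 1 → ∀ z : ℂ, 0 < z.im →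
      f (((a : ℂ) * z + b) / ((c : ℂ) * z + d)) = f z)
    (hsupp : ∃ Y : ℝ, 0 < Y ∧ ∀ z : ℂ, 0 < z.im →
      (∃ a b c d : ℤ, a * d - b * c = 1 ∧
        Y < ((((a : ℂ) * z + b) / ((c : ℂ) * z + d)).im)) → f z = 0) :
    Filter.Tendsto (fun ε : ℝ => ∫ x, f ((x : ℂ) + ε * Complex.I) ∂η)
      (nhdsWithin 0 (Set.Ioi 0))
      (nhds ((3 / Real.pi) * ∫ p in fundDom, f ((p.1 : ℂ) + p.2 * Complex.I) / p.2 ^ 2)) := by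
  have hg := Horocycle.isModularTestFunction_coe hcont hinv hsupp
  have hspace : ∫ w in ModularGroup.fdo, f w =
      ∫ p in fundDom, f ((p.1 : ℂ) + p.2 * Complex.I) / p.2 ^ 2 := by
    rw [Horocycle.setIntegral_fdo_eq_setIntegral_fundDom fun w ↦ f w]
    exact setIntegral_congr_fun Horocycle.measurableSet_fundDom fun p hp ↦ by
      simp only [Horocycle.coe_ofReIm p.1 hp.2.2]
  rw [← hspace]
  refine (hg.tendsto_integral_comp_ofReIm hη_ac).congr' ?_
  filter_upwards [self_mem_nhdsWithin] with ε hε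
  simp only [Horocycle.coe_ofReIm _ hε]

theorem horocycles_equidistribute_ac_measure
    (η : Measure ℝ) [IsProbabilityMeasure η]
    (hη_supp : η (Set.Icc (0 : ℝ) 1)ᶜ = 0)
    (hη_ac : η ≪ volume)
    (f : ℂ → ℝ)
    (hcont : ContinuousOn f {z : ℂ | 0 < z.im})
    (hinv : ∀ a b c d : ℤ, a * d - b * c = 1 → ∀ z : ℂ, 0 < z.im →
      f (((a : ℂ) * z + b) / ((c : ℂ) * z + d)) = f z)
    (hsupp : ∃ Y : ℝ, 0 < Y ∧ ∀ z : ℂ, 0 < z.im →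
      (∃ a b c d : ℤ, a * d - b * c = 1 ∧
        Y < ((((a : ℂ) * z + b) / ((c : ℂ) * z + d)).im)) → f z = 0) :
    Filter.Tendsto (fun ε : ℝ => ∫ x, f ((x : ℂ) + ε * Complex.I) ∂η)
      (nhdsWithin 0 (Set.Ioi 0))
      (nhds ((3 / Real.pi) * ∫ p in fundDom, f ((p.1 : ℂ) + p.2 * Complex.I) / p.2 ^ 2)) :=
  horocycles_equidistribute_ac_measure_general η hη_ac f hcont hinv hsupp
end
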